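/- arXiv:2403.15086 — 4 statements merged into one kernel-verified Lean document; each statement's English description precedes it below -/
import Mathlib

section
/- For every integer $p \geq 0$ and real parameter $t$, the interpolated multiple zeta value satisfies $\zeta^t(\{1\}^p, 2) = (1 + t + t^2 + \cdots + t^p)\,\zeta(p+2)$. -/
open scoped BigOperators
open MeasureTheory

/-- Multiple zeta value for an index given as a list. -/
noncomputable def mzvL (k : List ℕ) : ℝ :=
  ∑' m : {f : Fin k.length → ℕ+ // StrictMono f},
    ∏ i, (1 : ℝ) / (((m.1 i : ℕ+) : ℕ) : ℝ) ^ (k.get i)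

/-- Multiple zeta-star value for an index given as a list. -/
noncomputable def zetaStarL (k : List ℕ) : ℝ :=
  ∑' m : {f : Fin k.length → ℕ+ // Monotone f},
    ∏ i, (1 : ℝ) / (((m.1 i : ℕ+) : ℕ) : ℝ) ^ (k.get i)

/-- Riemann zeta at a natural number argument. -/
noncomputable def rz (s : ℕ) : ℝ := ∑' n : ℕ+, (1 : ℝ) / ((n : ℕ) : ℝ) ^ s

/-- Multiple polylogarithm (single variable). -/
noncomputable def LiL (k : List ℕ) (z : ℝ) : ℝ :=
  ∑' m : {f : Fin k.length → ℕ+ // StrictMono f},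
    z ^ (if h : 0 < k.length then ((m.1 ⟨k.length - 1, Nat.sub_lt h Nat.one_pos⟩ : ℕ+) : ℕ) else 0)
      / ∏ i, (((m.1 i : ℕ+) : ℕ) : ℝ) ^ (k.get i)

/-- Arakawa-Kaneko multiple zeta function. -/
noncomputable def xiL (k : List ℕ) (s : ℝ) : ℝ :=
  (1 / Real.Gamma s) *
    ∫ t in Set.Ioi (0 : ℝ), t ^ (s - 1) / (Real.exp t - 1) * LiL k (1 - Real.exp (-t))

/-- All indices obtained from `k` by filling each box with a comma or a plus. -/
def fills : List ℕ → List (List ℕ)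
  | [] => [[]]
  | [a] => [[a]]
  | a :: b :: rest => ((fills (b :: rest)).map (a :: ·)) ++ fills ((a + b) :: rest)
termination_by l => l.length

/-- Interpolated multiple zeta value (t-MZV). -/
noncomputable def zetaT (t : ℝ) (k : List ℕ) : ℝ :=
  ((fills k).map (fun k' => t ^ (k.length - k'.length) * mzvL k')).sum

/-- t-Arakawa-Kaneko multiple zeta value. -/
noncomputable def xiT (t : ℝ) (k : List ℕ) (s : ℝ) : ℝ :=
  ((fills k).map (fun k' => t ^ (k.length - k'.length) * xiL k' s)).sum

open scoped ENNReal

/-- connector -/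
noncomputable def Cn (y : ℝ) (a m : ℕ) : ℝ :=
  ∏ i ∈ Finset.range m, ((i : ℝ) + 1 - y) / ((a : ℝ) + i + 1 - y)

lemma Cn_nonneg {y : ℝ} (hy : y < 1) (a m : ℕ) : 0 ≤ Cn y a m := by
  unfold Cn
  refine Finset.prod_nonneg fun i _ => ?_
  have : (0 : ℝ) ≤ i := by positivity
  have : (0 : ℝ) ≤ a := by positivity
  apply div_nonneg <;> linarith

lemma Cn_zero {y : ℝ} (hy : y < 1) (m : ℕ) : Cn y 0 m = 1 := by
  unfold Cn
  refine Finset.prod_eq_one fun i _ => ?_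
  have : (0 : ℝ) ≤ i := by positivity
  have : (i : ℝ) + 1 - y ≠ 0 := by linarith
  simp [this]

lemma Cn_succ_right (y : ℝ) (a m : ℕ) :
    Cn y a (m + 1) = Cn y a m * (((m : ℝ) + 1 - y) / ((a : ℝ) + m + 1 - y)) := by
  unfold Cn
  rw [Finset.prod_range_succ]

lemma Cn_succ_left {y : ℝ} (hy : y < 1) (a m : ℕ) :
    Cn y (a + 1) m * ((a : ℝ) + 1 + m - y) = Cn y a m * ((a : ℝ) + 1 - y) := by
  induction m with
  | zero => simp [Cn]
  | succ m ih =>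
    rw [Cn_succ_right, Cn_succ_right]
    have h1 : (0 : ℝ) ≤ m := by positivity
    have h2 : (0 : ℝ) ≤ a := by positivity
    have h3 : (a : ℝ) + m + 1 - y ≠ 0 := by linarith
    have h4 : (a : ℝ) + 1 + m + 1 - y ≠ 0 := by linarith
    push_cast
    field_simp
    linear_combination ((m : ℝ) + 1 - y) * (a + 1 + (m + 1) - y) * ih

lemma Cn_symm {y : ℝ} (hy : y < 1) (a m : ℕ) : Cn y a m = Cn y m a := by
  induction a with
  | zero => rw [Cn_zero hy]; simp [Cn]
  | succ a ih =>
    have h := Cn_succ_left hy a m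
    rw [Cn_succ_right, ← ih]
    have h1 : (0 : ℝ) ≤ m := by positivity
    have h2 : (0 : ℝ) ≤ a := by positivity
    have h3 : (m : ℝ) + a + 1 - y ≠ 0 := by linarith
    field_simp
    linear_combination h

lemma Cn_le {y : ℝ} (hy0 : 0 ≤ y) (hy : y < 1) (a m : ℕ) :
    Cn y a (m + 1) ≤ 1 / ((a : ℝ) + 1 - y) := by
  have h2 : (0 : ℝ) ≤ a := by positivity
  induction m with
  | zero =>
    simp only [Cn, zero_add, Finset.prod_range_one, Nat.cast_zero, add_zero]
    apply div_le_div_of_nonneg_right <;> linarith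
  | succ m ih =>
    rw [Cn_succ_right]
    refine le_trans (mul_le_of_le_one_right (Cn_nonneg hy _ _) ?_) ih
    push_cast
    have h1 : (0 : ℝ) ≤ m := by positivity
    apply div_le_one_of_le₀ <;> linarith

lemma Cn_tendsto {y : ℝ} (hy0 : 0 ≤ y) (hy : y < 1) (a m : ℕ) :
    Filter.Tendsto (fun K : ℕ => Cn y (a + K) (m + 1)) Filter.atTop (nhds 0) := by
  refine squeeze_zero' (g := fun K : ℕ => 1 / (K : ℝ)) (Filter.Eventually.of_forall fun K => Cn_nonneg hy _ _) ?_
    tendsto_one_div_atTop_nhds_zero_nat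
  filter_upwards [Filter.eventually_gt_atTop 0] with K hK
  refine (Cn_le hy0 hy _ _).trans ?_
  have : (0 : ℝ) < K := by exact_mod_cast hK
  have h2 : (0 : ℝ) ≤ a := by positivity
  push_cast
  gcongr
  linarith

lemma Cn_hasSum {y : ℝ} (hy0 : 0 ≤ y) (hy : y < 1) (a m : ℕ) :
    HasSum (fun k : ℕ => Cn y (a + k + 1) (m + 1) / ((a : ℝ) + k + 1 - y))
      (Cn y a (m + 1) / (m + 1)) := by
  have hm : (0 : ℝ) ≤ m := by positivity
  have h2 : (0 : ℝ) ≤ a := by positivity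
  rw [hasSum_iff_tendsto_nat_of_nonneg]
  · have key : ∀ K : ℕ, ∑ k ∈ Finset.range K, Cn y (a + k + 1) (m + 1) / ((a : ℝ) + k + 1 - y)
        = (Cn y a (m + 1) - Cn y (a + K) (m + 1)) / (m + 1) := by
      intro K
      induction K with
      | zero => simp
      | succ K ih =>
        rw [Finset.sum_range_succ, ih]
        have h := Cn_succ_left hy (a + K) (m + 1)
        have h1 : (0 : ℝ) ≤ K := by positivity
        have h3 : (a : ℝ) + K + 1 - y ≠ 0 := by linarith
        rw [← add_assoc a K 1]
        push_cast at h
        field_simp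
        linear_combination h
    simp_rw [key]
    have := ((Cn_tendsto hy0 hy a m).const_sub (Cn y a (m + 1))).div_const ((m : ℝ) + 1)
    simpa using this
  · intro k
    have h1 : (0 : ℝ) ≤ k := by positivity
    exact div_nonneg (Cn_nonneg hy _ _) (by linarith)

lemma Cn_hasSum' {y : ℝ} (hy0 : 0 ≤ y) (hy : y < 1) (n : ℕ) :
    HasSum (fun m : ℕ => Cn y (n + 1) (m + 1) / ((m : ℝ) + 1 - y)) (1 / ((n : ℝ) + 1)) := by
  have := Cn_hasSum hy0 hy 0 n
  simp only [Cn_zero hy] at this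
  convert this using 2 with m
  rw [Cn_symm hy]
  simp

/-- ENNReal reciprocal -/
noncomputable def nv (n : ℕ) : ℝ≥0∞ := ENNReal.ofReal (1 / (n : ℝ))

/-- admissible sums -/
noncomputable def As : ℕ → ℕ → ℕ → ℝ≥0∞
  | 0, e, a => ∑' k : ℕ, nv (a + k + 1) ^ (e + 2)
  | s + 1, e, a => ∑' k : ℕ, ∑ ij ∈ Finset.HasAntidiagonal.antidiagonal e,
      nv (a + k + 1) ^ (1 + ij.1) * As s ij.2 (a + k + 1)

lemma geom {y : ℝ} (hy0 : 0 ≤ y) (hy : y < 1) (n : ℕ) :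
    ∑' e : ℕ, ENNReal.ofReal y ^ e * nv (n + 1) ^ (1 + e) = ENNReal.ofReal (1 / ((n : ℝ) + 1 - y)) := by
  have hn : (0 : ℝ) ≤ n := by positivity
  have h1 : ∀ e : ℕ, ENNReal.ofReal y ^ e * nv (n + 1) ^ (1 + e) =
      ENNReal.ofReal ((1 / ((n : ℝ) + 1)) * (y / (n + 1)) ^ e) := by
    intro e
    unfold nv
    rw [← ENNReal.ofReal_pow hy0, ← ENNReal.ofReal_pow (by positivity), ← ENNReal.ofReal_mul (by positivity)]
    congr 1
    push_cast
    rw [pow_add, div_pow y, div_pow 1 _ e, one_pow]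
    field_simp
  have hlt : y / ((n : ℝ) + 1) < 1 := by rw [div_lt_one (by positivity)]; linarith
  have hs := (hasSum_geometric_of_lt_one (by positivity) hlt).mul_left (1 / ((n : ℝ) + 1))
  simp_rw [h1]
  rw [← ENNReal.ofReal_tsum_of_nonneg (fun e => by positivity) hs.summable, hs.tsum_eq]
  congr 1
  have : (n : ℝ) + 1 - y ≠ 0 := by linarith
  have h3 : 1 - y / ((n : ℝ) + 1) ≠ 0 := by linarith
  field_simp

lemma cauchy (f g : ℕ → ℝ≥0∞) :
    ∑' e, ∑ ij ∈ Finset.HasAntidiagonal.antidiagonal e, f ij.1 * g ij.2 = (∑' i, f i) * ∑' j, g j := by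
  simp_rw [← ENNReal.tsum_mul_right, ← ENNReal.tsum_mul_left]
  rw [← ENNReal.tsum_prod (f := fun i j => f i * g j),
    ← (Finset.HasAntidiagonal.sigmaAntidiagonalEquivProd (A := ℕ)).tsum_eq, ENNReal.tsum_sigma']
  congr 1; ext e
  exact (Finset.tsum_subtype (Finset.HasAntidiagonal.antidiagonal e) (fun ij : ℕ × ℕ => f ij.1 * g ij.2)).symm

lemma As_gen {y : ℝ} (hy0 : 0 ≤ y) (hy : y < 1) (s a : ℕ) :
    ∑' e, ENNReal.ofReal y ^ e * As s e a =
      ∑' m : ℕ, ENNReal.ofReal (Cn y a (m + 1)) * nv (m + 1) ^ (s + 1) *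
        ENNReal.ofReal (1 / ((m : ℝ) + 1 - y)) := by
  have step : ∀ a m : ℕ, ∑' k : ℕ, ENNReal.ofReal (1 / (((a + k : ℕ) : ℝ) + 1 - y)) *
      ENNReal.ofReal (Cn y (a + k + 1) (m + 1)) = ENNReal.ofReal (Cn y a (m + 1)) * nv (m + 1) := by
    intro a m
    have h := Cn_hasSum hy0 hy a m
    have hk : ∀ k : ℕ, 0 ≤ 1 / ((a : ℝ) + k + 1 - y) := fun k => by
      have h1 : (0 : ℝ) ≤ k := by positivity
      have h2 : (0 : ℝ) ≤ a := by positivity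
      apply div_nonneg <;> linarith
    have e1 : ∀ k : ℕ, ENNReal.ofReal (1 / (((a + k : ℕ) : ℝ) + 1 - y)) *
      ENNReal.ofReal (Cn y (a + k + 1) (m + 1)) =
        ENNReal.ofReal (Cn y (a + k + 1) (m + 1) / ((a : ℝ) + k + 1 - y)) := by
      intro k
      push_cast
      rw [← ENNReal.ofReal_mul (hk k)]
      congr 1; ring
    simp_rw [e1]
    rw [← ENNReal.ofReal_tsum_of_nonneg _ h.summable, h.tsum_eq, nv, ← ENNReal.ofReal_mul (Cn_nonneg hy _ _)]
    · congr 1; push_cast; ring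
    · intro k
      have := mul_nonneg (Cn_nonneg hy (a + k + 1) (m + 1)) (hk k)
      rwa [mul_one_div] at this
  induction s generalizing a with
  | zero =>
    simp only [As]
    simp_rw [← ENNReal.tsum_mul_left]
    rw [ENNReal.tsum_comm]
    have e1 : ∀ k : ℕ, ∑' e : ℕ, ENNReal.ofReal y ^ e * nv (a + k + 1) ^ (e + 2) =
        ∑' m : ℕ, ENNReal.ofReal (1 / (((a + k : ℕ) : ℝ) + 1 - y)) *
      ENNReal.ofReal (Cn y (a + k + 1) (m + 1)) * ENNReal.ofReal (1 / ((m : ℝ) + 1 - y)) := by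
      intro k
      have e2 : ∀ e : ℕ, ENNReal.ofReal y ^ e * nv (a + k + 1) ^ (e + 2) =
        (ENNReal.ofReal y ^ e * nv (a + k + 1) ^ (1 + e)) * nv (a + k + 1) := by
        intro e; ring
      simp_rw [e2, mul_assoc (ENNReal.ofReal (1 / (((a + k : ℕ) : ℝ) + 1 - y)))]
      rw [ENNReal.tsum_mul_right, geom hy0 hy, ENNReal.tsum_mul_left]
      congr 1
      have h := Cn_hasSum' hy0 hy (a + k)
      have hm : ∀ m : ℕ, 0 ≤ (m : ℝ) + 1 - y := fun k => by
        have h1 : (0 : ℝ) ≤ k := by positivity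
        linarith
      unfold nv
      push_cast at h ⊢
      rw [← h.tsum_eq, ENNReal.ofReal_tsum_of_nonneg _ h.summable]
      · congr 1; ext m
        rw [← ENNReal.ofReal_mul (Cn_nonneg hy _ _), mul_one_div]
      · intro m
        exact div_nonneg (Cn_nonneg hy _ _) (hm m)
    simp_rw [e1]
    rw [ENNReal.tsum_comm]
    congr 1; ext m
    rw [ENNReal.tsum_mul_right, step]
    simp
  | succ s ih =>
    simp only [As]
    simp_rw [← ENNReal.tsum_mul_left]
    rw [ENNReal.tsum_comm]
    have e1 : ∀ k : ℕ, ∑' e : ℕ, ENNReal.ofReal y ^ e * ∑ ij ∈ Finset.HasAntidiagonal.antidiagonal e,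
        nv (a + k + 1) ^ (1 + ij.1) * As s ij.2 (a + k + 1) =
        ∑' m : ℕ, ENNReal.ofReal (1 / (((a + k : ℕ) : ℝ) + 1 - y)) *
      ENNReal.ofReal (Cn y (a + k + 1) (m + 1)) * (nv (m + 1) ^ (s + 1) * ENNReal.ofReal (1 / ((m : ℝ) + 1 - y))) := by
      intro k
      have e2 : ∀ e : ℕ, ENNReal.ofReal y ^ e * ∑ ij ∈ Finset.HasAntidiagonal.antidiagonal e,
        nv (a + k + 1) ^ (1 + ij.1) * As s ij.2 (a + k + 1) =
          ∑ ij ∈ Finset.HasAntidiagonal.antidiagonal e, (ENNReal.ofReal y ^ ij.1 * nv (a + k + 1) ^ (1 + ij.1)) *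
            (ENNReal.ofReal y ^ ij.2 * As s ij.2 (a + k + 1)) := by
        intro e
        rw [Finset.mul_sum]
        refine Finset.sum_congr rfl fun ij hij => ?_
        rw [← Finset.HasAntidiagonal.mem_antidiagonal.mp hij, pow_add]
        ring
      simp_rw [e2]
      rw [cauchy (fun i => ENNReal.ofReal y ^ i * nv (a + k + 1) ^ (1 + i))
        (fun j => ENNReal.ofReal y ^ j * As s j (a + k + 1)), geom hy0 hy, ih, ← ENNReal.tsum_mul_left]
      congr 1; ext m
      ring
    simp_rw [e1]
    rw [ENNReal.tsum_comm]
    congr 1; ext m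
    rw [ENNReal.tsum_mul_right, step]
    ring

lemma As_gen_zero {y : ℝ} (hy0 : 0 ≤ y) (hy : y < 1) (s : ℕ) :
    ∑' e, ENNReal.ofReal y ^ e * As s e 0 =
      ∑' e, ENNReal.ofReal y ^ e * ∑' m : ℕ, nv (m + 1) ^ (s + e + 2) := by
  rw [As_gen hy0 hy]
  simp_rw [← ENNReal.tsum_mul_left]
  rw [ENNReal.tsum_comm]
  congr 1; ext m
  rw [Cn_zero hy, ← geom hy0 hy, ← ENNReal.tsum_mul_left]
  congr 1; ext e
  simp; ring

lemma coeff_eq (u v : ℕ → ℝ≥0∞) (V : ℝ≥0∞) (hV : V ≠ ⊤) (hv : ∀ e, v e ≤ V)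
    (h : ∀ y : ℝ, 0 ≤ y → y < 1 →
      ∑' e, ENNReal.ofReal y ^ e * u e = ∑' e, ENNReal.ofReal y ^ e * v e) : u = v := by
  have finv : ∀ y : ℝ, 0 ≤ y → y < 1 → ∑' e, ENNReal.ofReal y ^ e * v e ≠ ⊤ := by
    intro y hy0 hy
    have : ∑' e, ENNReal.ofReal y ^ e * v e ≤ (∑' e, ENNReal.ofReal y ^ e) * V := by
      rw [← ENNReal.tsum_mul_right]
      gcongr with e
      exact hv e
    refine ne_top_of_le_ne_top ?_ this
    rw [ENNReal.tsum_geometric]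
    refine ENNReal.mul_ne_top ?_ hV
    rw [ENNReal.inv_ne_top]
    have : ENNReal.ofReal y < 1 := by simpa using hy
    exact (tsub_pos_of_lt this).ne'
  have finu : ∀ y : ℝ, 0 ≤ y → y < 1 → ∑' e, ENNReal.ofReal y ^ e * u e ≠ ⊤ := by
    intro y hy0 hy
    rw [h y hy0 hy]; exact finv y hy0 hy
  have hvt : ∀ e, v e ≠ ⊤ := fun e => ne_top_of_le_ne_top hV (hv e)
  have hut : ∀ e, u e ≠ ⊤ := by
    intro e he
    have h1 := ENNReal.ne_top_of_tsum_ne_top (finu (1/2) (by norm_num) (by norm_num)) e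
    rw [he] at h1
    apply h1
    apply ENNReal.mul_top
    apply pow_ne_zero
    simp
  have sm : ∀ w : ℕ → ℝ≥0∞, (∀ y : ℝ, 0 ≤ y → y < 1 → ∑' e, ENNReal.ofReal y ^ e * w e ≠ ⊤) →
      ∀ y : ℝ, |y| < 1 → Summable fun e => y ^ e * (w e).toReal := by
    intro w hw y hy
    have := ENNReal.summable_toReal (hw |y| (abs_nonneg y) hy)
    refine Summable.of_norm ?_
    convert this using 2 with e
    simp [ENNReal.toReal_mul, abs_mul]
  have eqs : ∀ y : ℝ, 0 ≤ y → y < 1 →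
      ∑' e, y ^ e * (u e).toReal = ∑' e, y ^ e * (v e).toReal := by
    intro y hy0 hy
    have := congrArg ENNReal.toReal (h y hy0 hy)
    rw [ENNReal.tsum_toReal_eq, ENNReal.tsum_toReal_eq] at this
    · simpa [ENNReal.toReal_mul, ENNReal.toReal_ofReal hy0] using this
    · intro e; exact ENNReal.mul_ne_top (by simp) (hvt e)
    · intro e; exact ENNReal.mul_ne_top (by simp) (hut e)
  set p := FormalMultilinearSeries.ofScalars ℝ (fun e => (u e).toReal - (v e).toReal) with hp
  have hf : HasFPowerSeriesAt (fun y : ℝ => ∑' e, y ^ e * ((u e).toReal - (v e).toReal)) p 0 := by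
    rw [hasFPowerSeriesAt_iff]
    have : ∀ᶠ y : ℝ in nhds 0, |y| < 1 := by
      have := Metric.ball_mem_nhds (0 : ℝ) one_pos
      filter_upwards [this] with y hy
      simpa using hy
    filter_upwards [this] with y hy
    simp only [hp, FormalMultilinearSeries.coeff_ofScalars, smul_eq_mul, zero_add]
    have h3 := (sm u finu y hy).sub (sm v finv y hy)
    simp_rw [← mul_sub] at h3
    exact h3.hasSum
  have p0 : p = 0 := by
    by_contra hne
    have h1 := hf.locally_ne_zero hne
    have h2 : ∀ᶠ y : ℝ in nhdsWithin 0 (Set.Ioi 0),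
        ∑' e, y ^ e * ((u e).toReal - (v e).toReal) ≠ 0 :=
      h1.filter_mono (nhdsWithin_mono _ fun y hy => ne_of_gt hy)
    have h3 : ∀ᶠ y : ℝ in nhdsWithin 0 (Set.Ioi 0), y ∈ Set.Ioo (0 : ℝ) 1 :=
      Ioo_mem_nhdsGT one_pos
    obtain ⟨y, hy1, hy2⟩ := (h2.and h3).exists
    apply hy1
    have ha : |y| < 1 := by rw [abs_of_pos hy2.1]; exact hy2.2
    simp_rw [mul_sub]
    rw [(sm u finu y ha).tsum_sub (sm v finv y ha), eqs y hy2.1.le hy2.2, sub_self]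
  ext e
  have := FormalMultilinearSeries.coeff_ofScalars (p := fun e => (u e).toReal - (v e).toReal) (n := e)
  rw [← hp, p0] at this
  simp [FormalMultilinearSeries.coeff] at this
  exact (ENNReal.toReal_eq_toReal_iff' (hut e) (hvt e)).mp (by linarith)

/-- zeta in ENNReal -/
noncomputable def ez (k : ℕ) : ℝ≥0∞ := ∑' m : ℕ, nv (m + 1) ^ k

lemma nv_ne_top (n : ℕ) : nv n ≠ ⊤ := by simp [nv]

lemma nv_toReal (n : ℕ) : (nv n).toReal = 1 / (n : ℝ) := by
  rw [nv, ENNReal.toReal_ofReal (by positivity)]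

lemma nv_le_one (n : ℕ) : nv (n + 1) ≤ 1 := by
  unfold nv
  rw [ENNReal.ofReal_le_one]
  apply div_le_one_of_le₀
  · push_cast; linarith [(Nat.cast_nonneg n : (0 : ℝ) ≤ n)]
  · positivity

lemma ez_anti (k l : ℕ) : ez (k + l) ≤ ez k := by
  unfold ez
  refine ENNReal.tsum_le_tsum fun m => ?_
  rw [pow_add]
  exact mul_le_of_le_one_right' (pow_le_one' (nv_le_one m) l)

lemma ez_two : ez 2 ≠ ⊤ := by
  unfold ez nv
  have h : Summable fun m : ℕ => (1 / ((m + 1 : ℕ) : ℝ)) ^ 2 := by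
    have := (summable_nat_add_iff 1).mpr (Real.summable_one_div_nat_pow (p := 2).mpr (by norm_num))
    simpa using this
  simp_rw [← ENNReal.ofReal_pow (show (0 : ℝ) ≤ 1 / ((_ + 1 : ℕ) : ℝ) by positivity)]
  exact h.tsum_ofReal_ne_top

lemma ez_ne_top (k : ℕ) : ez (k + 2) ≠ ⊤ := by
  rw [add_comm]
  exact ne_top_of_le_ne_top ez_two (ez_anti 2 k)

lemma ez_toReal (k : ℕ) : (ez k).toReal = rz k := by
  unfold ez rz
  rw [ENNReal.tsum_toReal_eq, tsum_pnat_eq_tsum_succ (f := fun n : ℕ => (1 : ℝ) / (n : ℝ) ^ k)]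
  · simp [nv_toReal]
  · intro m; exact ENNReal.pow_ne_top (nv_ne_top _)

theorem sum_formula (s e : ℕ) : As s e 0 = ez (s + e + 2) := by
  have := coeff_eq (fun e => As s e 0) (fun e => ez (s + e + 2)) (ez 2) ez_two ?_ ?_
  · exact congrFun this e
  · intro e; rw [add_comm]; exact ez_anti _ _
  · intro y hy0 hy; exact As_gen_zero hy0 hy s

/-- nested sums -/
noncomputable def Zs : List ℕ → ℕ → ℝ≥0∞
  | [], _ => 1
  | c :: ks, a => ∑' k : ℕ, nv (a + k + 1) ^ c * Zs ks (a + k + 1)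

lemma tsum_shift (h : ℕ → ℝ≥0∞) (a : ℕ) :
    ∑' x : ℕ+, (if a < (x : ℕ) then h x else 0) = ∑' k : ℕ, h (a + k + 1) := by
  have key := Summable.sum_add_tsum_nat_add' (f := fun n : ℕ => if a < n + 1 then h (n + 1) else 0)
    (k := a) ENNReal.summable
  rw [tsum_pnat_eq_tsum_succ (f := fun x : ℕ => if a < x then h x else 0), ← key,
    Finset.sum_eq_zero, zero_add]
  · congr 1; ext k
    rw [if_pos (by omega), add_comm k a]
  · intro i hi
    rw [if_neg]
    have := Finset.mem_range.mp hi
    omega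

open Classical in
lemma Zs_eq (k : List ℕ) (a : ℕ) : Zs k a =
    ∑' f : Fin k.length → ℕ+, if (StrictMono f ∧ ∀ i, a < (f i : ℕ)) then
      ∏ i, nv (f i) ^ (k.get i) else 0 := by
  induction k generalizing a with
  | nil =>
    rw [Zs]
    change 1 = ∑' f : Fin 0 → ℕ+, _
    rw [tsum_eq_single (fun i => Fin.elim0 i)]
    · rw [if_pos]
      · simp
      · exact ⟨fun i => Fin.elim0 i, fun i => Fin.elim0 i⟩
    · intro f hf
      exact absurd (funext fun i => Fin.elim0 i) hf
  | cons c ks ih =>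
    rw [Zs, ← tsum_shift (fun n => nv n ^ c * Zs ks n)]
    change _ = ∑' f : Fin (ks.length + 1) → ℕ+, _
    rw [← (Fin.consEquiv (fun _ : Fin (ks.length + 1) => ℕ+)).tsum_eq, ENNReal.tsum_prod']
    congr 1; ext x
    split_ifs with hx
    · rw [ih, ← ENNReal.tsum_mul_left]
      congr 1; ext g
      have : (StrictMono ((Fin.consEquiv (fun _ : Fin (ks.length + 1) => ℕ+)) (x, g)) ∧
          ∀ i, a < (((Fin.consEquiv (fun _ : Fin (ks.length + 1) => ℕ+)) (x, g) i : ℕ+) : ℕ)) ↔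
          (StrictMono g ∧ ∀ i, (x : ℕ) < (g i : ℕ)) := by
        simp only [Fin.consEquiv, Equiv.coe_fn_mk]
        rw [Fin.strictMono_cons, Fin.forall_fin_succ]
        simp only [Fin.cons_zero, Fin.cons_succ]
        constructor
        · rintro ⟨⟨h1, h2⟩, -⟩
          exact ⟨h2, fun i => h1 i⟩
        · rintro ⟨h1, h2⟩
          exact ⟨⟨fun i => h2 i, h1⟩, hx, fun i => hx.trans (h2 i)⟩
      by_cases hc : (StrictMono g ∧ ∀ i, (x : ℕ) < (g i : ℕ))
      · rw [if_pos hc]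
        refine Eq.trans ?_ (if_pos (this.mpr hc)).symm
        refine Eq.trans ?_ (Fin.prod_univ_succ _).symm
        rfl
      · rw [if_neg hc, mul_zero]
        exact (if_neg fun hh => hc (this.mp hh)).symm
    · symm
      rw [ENNReal.tsum_eq_zero]
      intro g
      refine if_neg ?_
      rintro ⟨-, h⟩
      exact hx (h 0)

lemma mzv_eq (k : List ℕ) : mzvL k = (Zs k 0).toReal := by
  classical
  have h : Zs k 0 = ∑' m : {f : Fin k.length → ℕ+ // StrictMono f},
    ∏ i, nv (m.1 i) ^ (k.get i) := by
    rw [Zs_eq]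
    refine Eq.trans ?_ (tsum_subtype {f : Fin k.length → ℕ+ | StrictMono f} (fun f => ∏ i, nv (f i) ^ (k.get i))).symm
    congr 1; ext f
    rw [Set.indicator_apply]
    congr 1
    simp
  rw [h, ENNReal.tsum_toReal_eq]
  · unfold mzvL
    congr 1; ext m
    rw [ENNReal.toReal_prod]
    simp [nv_toReal]
  · intro m
    exact ENNReal.prod_ne_top fun i _ => ENNReal.pow_ne_top (nv_ne_top _)

/-- weighted sum over fills -/
noncomputable def Ds (t : ℝ≥0∞) (k : List ℕ) (a : ℕ) : ℝ≥0∞ :=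
  ((fills k).map (fun k' => t ^ (k.length - k'.length) * Zs k' a)).sum

lemma fills_len (n : ℕ) : ∀ k : List ℕ, k.length = n → ∀ k' ∈ fills k, k'.length ≤ k.length := by
  induction n with
  | zero =>
    intro k hk
    rw [List.length_eq_zero_iff] at hk
    subst hk
    simp [fills]
  | succ n ih =>
    intro k hk k' hk'
    match k, hk with
    | [a], _ => simp [fills] at hk'; simp [hk']
    | a :: b :: rest, hk =>
      rw [fills] at hk'
      simp only [List.mem_append, List.mem_map] at hk'
      rcases hk' with ⟨l, hl, rfl⟩ | hl
      · have := ih (b :: rest) (by simpa using hk) l hl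
        simpa using this
      · have := ih ((a + b) :: rest) (by simpa using hk) k' hl
        simp at this ⊢
        omega

lemma list_tsum {α : Type*} (L : List α) (F : α → ℕ → ℝ≥0∞) :
    (L.map (fun l => ∑' k, F l k)).sum = ∑' k, (L.map (fun l => F l k)).sum := by
  induction L with
  | nil => simp
  | cons x L ih => simp [ih, ENNReal.tsum_add]

lemma Ds_cons (t : ℝ≥0∞) (c b : ℕ) (rest : List ℕ) (a : ℕ) :
    Ds t (c :: b :: rest) a = ∑' k : ℕ, nv (a + k + 1) ^ c * Ds t (b :: rest) (a + k + 1) +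
      t * Ds t ((c + b) :: rest) a := by
  unfold Ds
  rw [fills, List.map_append, List.sum_append]
  congr 1
  · simp_rw [← List.sum_map_mul_left]
    rw [← list_tsum, List.map_map]
    congr 1
    refine List.map_congr_left fun l hl => ?_
    simp only [Function.comp, List.length_cons, Zs, Nat.add_sub_add_right]
    rw [← ENNReal.tsum_mul_left]
    congr 1; ext k
    ring
  · rw [← List.sum_map_mul_left]
    congr 1
    refine List.map_congr_left fun l hl => ?_
    have := fills_len _ _ rfl l hl
    simp only [List.length_cons] at this ⊢
    rw [← mul_assoc, ← pow_succ']
    congr 2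
    omega

lemma Ds_single (t : ℝ≥0∞) (c a : ℕ) : Ds t [c] a = ∑' k : ℕ, nv (a + k + 1) ^ c := by
  simp [Ds, fills, Zs]

lemma Ds_rec (t : ℝ≥0∞) (q c a : ℕ) :
    Ds t (c :: (List.replicate q 1 ++ [2])) a = ∑' k : ℕ,
      (∑ ij ∈ Finset.HasAntidiagonal.antidiagonal q,
        t ^ ij.1 * nv (a + k + 1) ^ (c + ij.1) * Ds t (List.replicate ij.2 1 ++ [2]) (a + k + 1)
        + t ^ (q + 1) * nv (a + k + 1) ^ (c + q + 2)) := by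
  induction q generalizing c a with
  | zero =>
    simp only [List.replicate_zero, List.nil_append]
    rw [Ds_cons, Ds_single t (c + 2), ENNReal.tsum_add, ← ENNReal.tsum_mul_left]
    simp
  | succ q ih =>
    rw [List.replicate_succ, List.cons_append, Ds_cons, ih (c + 1), ← ENNReal.tsum_mul_left,
      ← ENNReal.tsum_add]
    congr 1; ext k
    rw [Finset.Nat.sum_antidiagonal_succ, mul_add, Finset.mul_sum, add_assoc (t ^ _ * _ * _), List.replicate_succ,
      List.cons_append]
    congr 1
    · simp
    · congr 1
      · refine Finset.sum_congr rfl fun ij _ => ?_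
        rw [show c + (ij.1 + 1) = c + 1 + ij.1 by ring]
        ring
      · rw [show c + (q + 1) + 2 = c + 1 + q + 2 by ring]
        ring

lemma Ds_As (t : ℝ≥0∞) (p a : ℕ) : Ds t (List.replicate p 1 ++ [2]) a =
    ∑ ij ∈ Finset.HasAntidiagonal.antidiagonal p, t ^ ij.1 * As ij.2 ij.1 a := by
  induction p using Nat.strong_induction_on generalizing a with
  | _ p ih =>
    match p with
    | 0 => simp [Ds_single, As]
    | p + 1 =>
      rw [List.replicate_succ, List.cons_append, Ds_rec, Finset.Nat.sum_antidiagonal_succ',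
        ENNReal.tsum_add, add_comm]
      congr 1
      · simp only [As]
        rw [ENNReal.tsum_mul_left]
        congr 1; congr 1; ext k
        congr 1; ring
      · simp only [As]
        simp_rw [← ENNReal.tsum_mul_left]
        rw [← Summable.tsum_finsetSum (fun _ _ => ENNReal.summable)]
        congr 1; ext k
        rw [Finset.sum_congr rfl (fun ij hij => by
          rw [ih ij.2 (by have := Finset.HasAntidiagonal.mem_antidiagonal.mp hij; omega)])]
        simp only [Finset.mul_sum, Finset.sum_sigma']
        refine Finset.sum_nbij' (fun x => ⟨(x.1.1 + x.2.1, x.2.2), (x.1.1, x.2.1)⟩)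
          (fun x => ⟨(x.2.1, x.2.2 + x.1.2), (x.2.2, x.1.2)⟩) ?_ ?_ ?_ ?_ ?_
        · rintro ⟨⟨i, j⟩, ⟨k, l⟩⟩ h
          simp at h ⊢
          omega
        · rintro ⟨⟨i, j⟩, ⟨k, l⟩⟩ h
          simp at h ⊢
          omega
        · rintro ⟨⟨i, j⟩, ⟨k, l⟩⟩ h
          simp at h ⊢
          simp [h]
        · rintro ⟨⟨i, j⟩, ⟨k, l⟩⟩ h
          simp at h ⊢
          simp [h]
        · rintro ⟨⟨i, j⟩, ⟨k, l⟩⟩ h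
          simp only
          rw [pow_add]
          ring

lemma Ds_final (t : ℝ≥0∞) (p : ℕ) : Ds t (List.replicate p 1 ++ [2]) 0 =
    (∑ i ∈ Finset.range (p + 1), t ^ i) * ez (p + 2) := by
  rw [Ds_As, ← Finset.Nat.sum_antidiagonal_eq_sum_range_succ (fun i _ => t ^ i), Finset.sum_mul]
  refine Finset.sum_congr rfl fun ij hij => ?_
  rw [sum_formula, add_comm ij.2, Finset.HasAntidiagonal.mem_antidiagonal.mp hij]

lemma Zs_ne_top (p : ℕ) : ∀ k' ∈ fills (List.replicate p 1 ++ [2]), Zs k' 0 ≠ ⊤ := by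
  intro k' hk'
  have h := Ds_final 1 p
  have h1 : Zs k' 0 ≤ Ds 1 (List.replicate p 1 ++ [2]) 0 := by
    unfold Ds
    simp only [one_pow, one_mul]
    exact List.single_le_sum (fun _ _ => bot_le) _ (List.mem_map_of_mem hk')
  refine ne_top_of_le_ne_top ?_ h1
  rw [h]
  refine ENNReal.mul_ne_top ?_ (ez_ne_top p)
  simp

lemma list_toReal (L : List ℝ≥0∞) (h : ∀ x ∈ L, x ≠ ⊤) :
    L.sum.toReal = (L.map ENNReal.toReal).sum ∧ L.sum ≠ ⊤ := by
  induction L with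
  | nil => simp
  | cons x L ih =>
    obtain ⟨h1, h2⟩ := ih fun y hy => h y (List.mem_cons_of_mem _ hy)
    have hx := h x List.mem_cons_self
    simp only [List.sum_cons, List.map_cons]
    exact ⟨by rw [ENNReal.toReal_add hx h2, h1], ENNReal.add_ne_top.mpr ⟨hx, h2⟩⟩

lemma stmt3_nonneg (p : ℕ) (t : ℝ) (ht : 0 ≤ t) :
    zetaT t (List.replicate p 1 ++ [2]) =
      (∑ i ∈ Finset.range (p + 1), t ^ i) * rz (p + 2) := by
  have h := congrArg ENNReal.toReal (Ds_final (ENNReal.ofReal t) p)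
  rw [ENNReal.toReal_mul, ez_toReal, ENNReal.toReal_sum (by simp)] at h
  simp only [ENNReal.toReal_pow, ENNReal.toReal_ofReal ht] at h
  rw [← h]
  unfold Ds zetaT
  rw [(list_toReal _ _).1, List.map_map]
  · congr 1
    refine List.map_congr_left fun l hl => ?_
    simp [ENNReal.toReal_mul, ENNReal.toReal_ofReal ht, mzv_eq]
  · intro x hx
    obtain ⟨l, hl, rfl⟩ := List.mem_map.mp hx
    exact ENNReal.mul_ne_top (by simp) (Zs_ne_top p l hl)

theorem stmt3 (p : ℕ) (t : ℝ) :
    zetaT t (List.replicate p 1 ++ [2]) =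
      (∑ i ∈ Finset.range (p + 1), t ^ i) * rz (p + 2) := by
  set k := List.replicate p 1 ++ [2] with hk
  let P : Polynomial ℝ := ((fills k).map (fun k' =>
    Polynomial.X ^ (k.length - k'.length) * Polynomial.C (mzvL k'))).sum
  let Q : Polynomial ℝ := (∑ i ∈ Finset.range (p + 1), Polynomial.X ^ i) * Polynomial.C (rz (p + 2))
  have hP : ∀ x, P.eval x = zetaT x k := by
    intro x
    simp only [P, zetaT]
    rw [← Polynomial.coe_evalRingHom, map_list_sum, List.map_map]
    congr 1
    refine List.map_congr_left fun l hl => ?_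
    simp only [Function.comp, Polynomial.coe_evalRingHom, Polynomial.eval_mul, Polynomial.eval_pow, Polynomial.eval_X, Polynomial.eval_C]
  have hQ : ∀ x, Q.eval x = (∑ i ∈ Finset.range (p + 1), x ^ i) * rz (p + 2) := by
    intro x
    simp [Q, Polynomial.eval_finsetSum]
  rw [← hP, ← hQ]
  congr 1
  apply Polynomial.eq_of_infinite_eval_eq
  refine (Set.Ici_infinite (0 : ℝ)).mono fun x hx => ?_
  simp only [Set.mem_ofPred_eq, hP, hQ]
  exact stmt3_nonneg p x hx
end

section
/- For every integer $k \geq 0$: if $k$ is even then $\sum_{r+k_1+k_2=k} (-1)^{k_2}\, \xi(\{1\}^r, k_1+1; k_2+1) = \zeta(k+2)$, and if $k$ is odd then this alternating sum equals $0$. Here the sum runs over nonnegative integers $r, k_1, k_2$ with $r+k_1+k_2 = k$. -/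
open scoped BigOperators
open MeasureTheory

noncomputable def wk (m : ℕ) (t : ℝ) : ℝ := Real.exp (-t) * (1 - Real.exp (-t)) ^ m

lemma wk_nonneg (m : ℕ) {t : ℝ} (ht : 0 ≤ t) : 0 ≤ wk m t := by
  have : Real.exp (-t) ≤ 1 := Real.exp_le_one_iff.2 (by linarith)
  exact mul_nonneg (Real.exp_pos _).le (pow_nonneg (by linarith) _)

lemma wk_le (m : ℕ) {t : ℝ} (ht : 0 ≤ t) : wk m t ≤ Real.exp (-t) := by
  have : Real.exp (-t) ≤ 1 := Real.exp_le_one_iff.2 (by linarith)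
  have h0 := Real.exp_pos (-t)
  exact mul_le_of_le_one_right h0.le (pow_le_one₀ (by linarith) (by linarith))

lemma wk_cont (m : ℕ) : Continuous (wk m) := by
  unfold wk; fun_prop

lemma int_base (p : ℕ) : IntegrableOn (fun t : ℝ => t ^ p * Real.exp (-t)) (Set.Ioi 0) := by
  have := Real.GammaIntegral_convergent (s := (p : ℝ) + 1) (by positivity)
  refine this.congr_fun (fun t ht => ?_) measurableSet_Ioi
  simp [mul_comm]

lemma int_wk (p m : ℕ) : IntegrableOn (fun t : ℝ => t ^ p * wk m t) (Set.Ioi 0) := by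
  refine Integrable.mono' (int_base p) ?_ ?_
  · exact (((continuous_id.pow p).mul (wk_cont m))).aestronglyMeasurable
  · refine (ae_restrict_iff' measurableSet_Ioi).2 (Filter.Eventually.of_forall fun t ht => ?_)
    have ht : (0:ℝ) ≤ t := le_of_lt ht
    rw [Real.norm_of_nonneg (mul_nonneg (pow_nonneg ht _) (wk_nonneg m ht))]
    exact mul_le_mul_of_nonneg_left (wk_le m ht) (pow_nonneg ht _)

noncomputable def Kk (p m : ℕ) : ℝ := (∫ t in Set.Ioi (0 : ℝ), t ^ p * wk m t) / (p.factorial : ℝ)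

lemma Kk_nonneg (p m : ℕ) : 0 ≤ Kk p m := by
  refine div_nonneg (setIntegral_nonneg measurableSet_Ioi fun t ht => ?_) (by positivity)
  have ht : (0:ℝ) ≤ t := le_of_lt ht
  exact (mul_nonneg (pow_nonneg ht _) (wk_nonneg m ht))

lemma tend_wk (p m : ℕ) :
    Filter.Tendsto (fun t : ℝ => t ^ p * wk m t) Filter.atTop (nhds 0) := by
  refine squeeze_zero' ?_ ?_ (Real.tendsto_pow_mul_exp_neg_atTop_nhds_zero p)
  · filter_upwards [Filter.eventually_ge_atTop 0] with t ht
    exact (mul_nonneg (pow_nonneg ht _) (wk_nonneg m ht))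
  · filter_upwards [Filter.eventually_ge_atTop 0] with t ht
    exact mul_le_mul_of_nonneg_left (wk_le m ht) (pow_nonneg ht _)

lemma deriv_e (t : ℝ) : HasDerivAt (fun t : ℝ => Real.exp (-t)) (-Real.exp (-t)) t := by
  simpa using (hasDerivAt_neg t).exp

lemma deriv_wk (m : ℕ) (t : ℝ) :
    HasDerivAt (wk (m+1)) ((m + 1 : ℝ) * wk m t - (m + 2 : ℝ) * wk (m+1) t) t := by
  have h := (deriv_e t).mul (((deriv_e t).const_sub 1).pow (m+1))
  refine h.congr_deriv ?_
  simp [wk]; ring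

lemma deriv_wk0 (t : ℝ) : HasDerivAt (wk 0) (- wk 0 t) t := by
  have h := deriv_e t
  have e : wk 0 = fun t => Real.exp (-t) := by ext; simp [wk]
  rw [e]; exact h

lemma Kk_zero (m : ℕ) : ((m : ℝ) + 1) * Kk 0 m = 1 := by
  have hd : ∀ t ∈ Set.Ici (0:ℝ), HasDerivAt (fun t : ℝ => (1 - Real.exp (-t)) ^ (m+1))
      (((m:ℝ)+1) * (t ^ 0 * wk m t)) t := by
    intro t _
    refine (((deriv_e t).const_sub 1).pow (m+1)).congr_deriv ?_
    simp [wk]; ring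
  have hl : Filter.Tendsto (fun t : ℝ => (1 - Real.exp (-t)) ^ (m+1)) Filter.atTop (nhds 1) := by
    have := ((Real.tendsto_exp_neg_atTop_nhds_zero).const_sub 1).pow (m+1)
    simpa using this
  have := integral_Ioi_of_hasDerivAt_of_tendsto' hd ((int_wk 0 m).const_mul _) hl
  rw [integral_const_mul] at this
  simpa [Kk] using this

lemma Kk_p0 (p : ℕ) : Kk (p+1) 0 = Kk p 0 := by
  have hd : ∀ t ∈ Set.Ici (0:ℝ), HasDerivAt (fun t : ℝ => t ^ (p+1) * wk 0 t)
      (((p:ℝ)+1) * (t ^ p * wk 0 t) - t ^ (p+1) * wk 0 t) t := by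
    intro t _
    refine ((hasDerivAt_pow (p+1) t).mul (deriv_wk0 t)).congr_deriv ?_
    push_cast; simp; ring
  have := integral_Ioi_of_hasDerivAt_of_tendsto' hd
    (((int_wk p 0).const_mul _).sub (int_wk (p+1) 0)) (tend_wk _ _)
  rw [integral_sub ((int_wk p 0).const_mul _) (int_wk (p+1) 0), integral_const_mul] at this
  simp only [ne_eq, Nat.add_eq_zero_iff, one_ne_zero, and_false, not_false_eq_true, zero_pow, zero_mul, sub_zero] at this
  unfold Kk
  rw [Nat.factorial_succ]
  have h1 : (p.factorial : ℝ) ≠ 0 := by positivity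
  have h2 : (p : ℝ) + 1 ≠ 0 := by positivity
  push_cast
  field_simp
  linarith

lemma Kk_rec (p m : ℕ) :
    Kk p (m+1) = ((m:ℝ)+2) * Kk (p+1) (m+1) - ((m:ℝ)+1) * Kk (p+1) m := by
  have i1 := (int_wk p (m+1)).const_mul ((p:ℝ)+1)
  have i2 := (int_wk (p+1) m).const_mul ((m:ℝ)+1)
  have i3 := (int_wk (p+1) (m+1)).const_mul ((m:ℝ)+2)
  have hd : ∀ t ∈ Set.Ici (0:ℝ), HasDerivAt (fun t : ℝ => t ^ (p+1) * wk (m+1) t)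
      (((p:ℝ)+1) * (t ^ p * wk (m+1) t) + (((m:ℝ)+1) * (t ^ (p+1) * wk m t)
        - ((m:ℝ)+2) * (t ^ (p+1) * wk (m+1) t))) t := by
    intro t _
    refine ((hasDerivAt_pow (p+1) t).mul (deriv_wk m t)).congr_deriv ?_
    push_cast; ring
  have := integral_Ioi_of_hasDerivAt_of_tendsto' hd (i1.add (i2.sub i3)) (tend_wk _ _)
  erw [integral_add i1 (i2.sub i3), integral_sub i2 i3, integral_const_mul, integral_const_mul,
    integral_const_mul] at this
  simp only [ne_eq, Nat.add_eq_zero_iff, one_ne_zero, and_false, not_false_eq_true, zero_pow, zero_mul, sub_zero] at this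
  unfold Kk
  rw [Nat.factorial_succ]
  have h1 : (p.factorial : ℝ) ≠ 0 := by positivity
  have h2 : (p : ℝ) + 1 ≠ 0 := by positivity
  push_cast
  field_simp
  linarith

open PowerSeries in
noncomputable def Pp (m : ℕ) : PowerSeries ℝ := ∏ i ∈ Finset.range m, (1 + C (1 / ((i:ℝ)+1)) * X)

open PowerSeries in
noncomputable def Qq' (m : ℕ) : PowerSeries ℝ := mk fun p => (-1) ^ p * (((m:ℝ)+1) * Kk p m)

open PowerSeries in
noncomputable def Dd (m : ℕ) : PowerSeries ℝ := mk fun p => 1 / ((m:ℝ)+1) ^ p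

open PowerSeries in
noncomputable def Rr (m : ℕ) : PowerSeries ℝ := mk fun p => if Even p then 1 / ((m:ℝ)+1) ^ p else 0

open PowerSeries in
lemma Qq_Pp (m : ℕ) : Qq' m * Pp (m+1) = 1 := by
  induction m with
  | zero =>
    simp only [Pp, zero_add, Finset.prod_range_one]
    ext p
    rcases p with _ | p
    · have := Kk_zero 0
      simp [Qq', mul_add, coeff_zero_eq_constantCoeff_apply] at this ⊢
      simpa using this
    · have := Kk_p0 p
      simp [Qq', mul_add, coeff_one, coeff_succ_mul_X, this]
      ring
  | succ m ih =>
    have key : Qq' (m+1) * (1 + C (1 / (((m+1:ℕ):ℝ)+1)) * X) = Qq' m := by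
      ext p
      rcases p with _ | p
      · have h1 := Kk_zero (m+1)
        have h2 := Kk_zero m
        simp [Qq', mul_add, ← mul_assoc] at *
        simp [h1, h2]
      · have := Kk_rec p m
        rw [mul_add, ← mul_assoc, mul_comm _ (C _)]
        simp only [map_add, coeff_succ_mul_X, coeff_C_mul, mul_one, Qq', coeff_mk, mul_assoc]
        have h2 : ((m:ℝ)+1+1) ≠ 0 := by positivity
        push_cast
        field_simp
        rw [this]
        ring
    rw [Pp, Finset.prod_range_succ, ← Pp, mul_comm (Pp _), ← mul_assoc, key, ih]

open PowerSeries in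
lemma triple (m : ℕ) : Pp m * Dd m * Qq' m = Rr m := by
  have hq := Qq_Pp m
  rw [Pp, Finset.prod_range_succ, ← Pp] at hq
  have h0 : ((m:ℝ)+1) ≠ 0 := by positivity
  have hD : Dd m * (1 - C (1 / ((m:ℝ)+1)) * X) = 1 := by
    ext p
    rw [mul_sub, ← mul_assoc, mul_comm _ (C _)]
    rcases p with _ | p
    · simp [Dd]
    · simp only [map_sub, coeff_succ_mul_X, coeff_C_mul, mul_one, Dd, coeff_mk, coeff_one, mul_assoc]
      simp
      field_simp; ring
  have hR : Rr m * ((1 - C (1 / ((m:ℝ)+1)) * X) * (1 + C (1 / ((m:ℝ)+1)) * X)) = 1 := by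
    have : (1 - C (1 / ((m:ℝ)+1)) * X) * (1 + C (1 / ((m:ℝ)+1)) * X)
      = 1 - C (1 / ((m:ℝ)+1)^2) * (X * X) := by
      rw [← one_div_pow, map_pow]; ring
    rw [this, mul_sub, mul_left_comm, ← mul_assoc (Rr m)]
    ext p
    rcases p with _ | _ | p
    · simp [Rr]
    · simp only [map_sub, coeff_succ_mul_X, coeff_C_mul, mul_one, Rr, coeff_mk, coeff_one]
      simp
    · simp only [map_sub, coeff_succ_mul_X, coeff_C_mul, mul_one, Rr, coeff_mk, coeff_one]
      have : Even (p+1+1) ↔ Even p := by simp [Nat.even_add_one]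
      simp only [this]
      split_ifs <;> simp_all
      field_simp; ring
  linear_combination (Rr m) * (Dd m * (1 - C (1 / ((m:ℝ)+1)) * X)) * hq - (Pp m * Dd m * Qq' m) * hR + (Rr m) * hD

noncomputable def HH (m : ℕ) : ℝ := ∑ i ∈ Finset.range m, 1 / ((i:ℝ)+1)

lemma HH_nonneg (m : ℕ) : 0 ≤ HH m := Finset.sum_nonneg fun i _ => by positivity

lemma HH_succ (m : ℕ) : HH (m+1) = HH m + 1 / ((m:ℝ)+1) := by
  simp [HH, Finset.sum_range_succ]

lemma HH_le_succ (m : ℕ) : HH m ≤ HH (m+1) := by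
  rw [HH_succ]; have : 0 ≤ 1 / ((m:ℝ)+1) := by positivity
  linarith

lemma HH_one_le (m : ℕ) : 1 ≤ HH (m+1) := by
  induction m with
  | zero => simp [HH]
  | succ m ih => exact ih.trans (HH_le_succ _)

lemma HH_le_log (m : ℕ) : HH m ≤ 1 + Real.log m := by
  refine le_trans (le_of_eq ?_) (harmonic_le_one_add_log m)
  simp [HH, harmonic]

open PowerSeries in
lemma Pp_succ_coeff (r m : ℕ) : coeff (r+1) (Pp (m+1)) =
    coeff (r+1) (Pp m) + 1 / ((m:ℝ)+1) * coeff r (Pp m) := by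
  rw [Pp, Finset.prod_range_succ, ← Pp, mul_add, mul_one, mul_left_comm, map_add, coeff_C_mul,
    coeff_succ_mul_X]

open PowerSeries in
lemma Pp_coeff_zero (m : ℕ) : coeff 0 (Pp m) = 1 := by
  simp [Pp, map_prod]

open PowerSeries in
lemma Pp_bound (r m : ℕ) : 0 ≤ coeff r (Pp m) ∧ coeff r (Pp m) ≤ HH m ^ r := by
  induction m generalizing r with
  | zero => rcases r with _ | r <;> simp [Pp, HH, coeff_one]
  | succ m ih =>
    rcases r with _ | r
    · rw [Pp_coeff_zero]; simp
    · rw [Pp_succ_coeff]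
      have h1 : 0 ≤ 1 / ((m:ℝ)+1) := by positivity
      refine ⟨add_nonneg (ih _).1 (mul_nonneg h1 (ih _).1), ?_⟩
      calc _ ≤ HH m ^ (r+1) + 1 / ((m:ℝ)+1) * HH m ^ r :=
            add_le_add (ih _).2 (mul_le_mul_of_nonneg_left (ih _).2 h1)
        _ = HH m ^ r * HH (m+1) := by rw [HH_succ]; ring
        _ ≤ HH (m+1) ^ r * HH (m+1) := by
            gcongr
            · exact HH_nonneg _
            · exact HH_nonneg _
            · exact HH_le_succ _
        _ = _ := by ring

lemma Kk_bound (p m : ℕ) : ((m:ℝ)+1) * Kk p m ≤ HH (m+1) ^ p := by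
  induction p generalizing m with
  | zero => rw [Kk_zero]; simp
  | succ p ih =>
    induction m with
    | zero =>
      have : Kk (p+1) 0 = Kk p 0 := Kk_p0 p
      rw [this]
      have := ih 0
      simpa [HH] using this
    | succ m ihm =>
      have h := Kk_rec p m
      have h1 : 0 < ((m:ℝ)+2) := by positivity
      have h2 := ih (m+1)
      push_cast at h2 ⊢
      have h3 : Kk p (m+1) ≤ 1 / ((m:ℝ)+2) * HH (m+1+1) ^ p := by
        rw [one_div, inv_mul_eq_div, le_div_iff₀ h1]; linarith
      have h4 : HH (m+1+1) ^ (p+1) = HH (m+1+1) ^ p * HH (m+1) + 1 / ((m:ℝ)+2) * HH (m+1+1) ^ p := by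
        rw [pow_succ, HH_succ (m+1)]; push_cast; rw [add_assoc (m:ℝ) 1 1, one_add_one_eq_two]; ring
      have h5 : HH (m+1) ^ (p+1) ≤ HH (m+1+1) ^ p * HH (m+1) := by
        rw [pow_succ]
        gcongr
        · exact HH_nonneg _
        · exact HH_nonneg _
        · exact HH_le_succ _
      linarith

lemma summ_HH (q : ℕ) : Summable fun m : ℕ => 1 / ((m:ℝ)+1)^2 * HH (m+1) ^ q := by
  have hq : (0:ℝ) < 1 / (2 * ((q:ℝ)+1)) := by positivity
  set ε : ℝ := 1 / (2 * ((q:ℝ)+1)) with hε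
  have hs : Summable fun m : ℕ => (1 + 1/ε)^q * (1 / ((m+1:ℕ):ℝ) ^ (3/2 : ℝ)) := by
    refine Summable.mul_left _ ?_
    exact (summable_nat_add_iff (f := fun m : ℕ => 1 / (m:ℝ) ^ (3/2 : ℝ)) 1).2
      (Real.summable_one_div_nat_rpow.2 (by norm_num))
  refine Summable.of_nonneg_of_le (fun m => ?_) (fun m => ?_) hs
  · have := HH_nonneg (m+1)
    positivity
  · have hx : (1:ℝ) ≤ ((m+1:ℕ):ℝ) := by push_cast; linarith [Nat.cast_nonneg (α := ℝ) m]
    have e0 : ((m:ℝ)+1) = ((m+1:ℕ):ℝ) := by push_cast; ring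
    rw [e0]
    have hH := HH_le_log (m+1)
    have hH0 := HH_nonneg (m+1)
    set x : ℝ := ((m+1:ℕ):ℝ)
    have hx0 : 0 < x := by linarith
    have hl := Real.log_le_rpow_div hx0.le hq
    have h1 : 1 ≤ x ^ ε := Real.one_le_rpow hx hq.le
    have h2 : HH (m+1) ≤ (1 + 1/ε) * x ^ ε := by
      have : (1 + 1/ε) * x ^ ε = x ^ ε + x ^ ε / ε := by ring
      linarith
    have h3 : (x ^ ε) ^ q ≤ x ^ (1/2 : ℝ) := by
      rw [← Real.rpow_natCast, ← Real.rpow_mul hx0.le]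
      refine Real.rpow_le_rpow_of_exponent_le hx ?_
      rw [hε, one_div, inv_mul_eq_div, div_le_iff₀ (by positivity)]
      linarith
    calc 1 / x^2 * HH (m+1) ^ q ≤ 1 / x^2 * ((1 + 1/ε) * x ^ ε)^q := by gcongr
      _ = (1 + 1/ε)^q * (1 / x^2 * (x ^ ε)^q) := by rw [mul_pow]; ring
      _ ≤ (1 + 1/ε)^q * (1 / x^2 * x ^ (1/2 : ℝ)) := by gcongr
      _ = _ := by
        congr 1
        rw [← Real.rpow_natCast x 2, one_div (x ^ _), one_div (x ^ _), ← Real.rpow_neg hx0.le,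
          ← Real.rpow_neg hx0.le, ← Real.rpow_add hx0]
        norm_num

open PowerSeries in
lemma summ_main (r k p : ℕ) : Summable fun m : ℕ =>
    1 / ((m:ℝ)+1) ^ (k+1) * coeff r (Pp m) * Kk p m := by
  refine Summable.of_nonneg_of_le (fun m => ?_) (fun m => ?_) (summ_HH (r+p))
  · exact mul_nonneg (mul_nonneg (by positivity) (Pp_bound r m).1) (Kk_nonneg _ _)
  · have h0 : (0:ℝ) < (m:ℝ)+1 := by positivity
    have h1 : (1:ℝ) ≤ (m:ℝ)+1 := by linarith [Nat.cast_nonneg (α := ℝ) m]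
    have hk : Kk p m = 1/((m:ℝ)+1) * (((m:ℝ)+1) * Kk p m) := by field_simp
    have hKn : 0 ≤ (((m:ℝ)+1) * Kk p m) := mul_nonneg h0.le (Kk_nonneg _ _)
    have a1 : coeff r (Pp m) ≤ HH (m+1) ^ r :=
      (Pp_bound r m).2.trans (pow_le_pow_left₀ (HH_nonneg _) (HH_le_succ _) _)
    have a2 := Kk_bound p m
    have a3 : 1 / ((m:ℝ)+1) ^ (k+1) ≤ 1/((m:ℝ)+1) := by
      apply one_div_le_one_div_of_le h0
      exact le_self_pow₀ h1 (by simp)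
    have hH := HH_nonneg (m+1)
    have hP := (Pp_bound r m).1
    rw [hk]
    calc _ ≤ 1/((m:ℝ)+1) * HH (m+1) ^ r * (1/((m:ℝ)+1) * HH (m+1)^p) := by gcongr
      _ = _ := by rw [pow_add]; field_simp

open PowerSeries in
/-- the one-variable coefficient sum for fixed top index -/
lemma esum (r m : ℕ) (n : ℕ+) (hn : (n:ℕ) = m + 1) :
    ∑ t ∈ Finset.powersetCard r (Finset.Iio n), ∏ i ∈ t, 1 / ((i:ℕ):ℝ) = coeff r (Pp m) := by
  have hP : Pp m = ∏ i ∈ (Finset.Iio n : Finset ℕ+), (1 + C (1 / ((i:ℕ):ℝ)) * X) := by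
    rw [Pp]
    refine Finset.prod_bij (fun i _ => Nat.succPNat i) ?_ ?_ ?_ ?_
    · intro a ha
      rw [Finset.mem_range] at ha
      rw [Finset.mem_Iio, ← PNat.coe_lt_coe, Nat.succPNat_coe]; omega
    · intro a _ b _ h
      exact Nat.succPNat_injective h
    · intro b hb
      rw [Finset.mem_Iio, ← PNat.coe_lt_coe] at hb
      have := b.pos
      refine ⟨b.natPred, ?_, PNat.succPNat_natPred b⟩
      rw [Finset.mem_range, PNat.natPred]; omega
    · intro a _
      simp
  rw [hP, Finset.prod_one_add, map_sum]
  have : ∀ t ∈ (Finset.Iio n : Finset ℕ+).powerset,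
      coeff r (∏ i ∈ t, (C (1 / ((i:ℕ):ℝ)) * X : PowerSeries ℝ)) =
      if t.card = r then ∏ i ∈ t, 1 / ((i:ℕ):ℝ) else 0 := by
    intro t _
    rw [Finset.prod_mul_distrib, Finset.prod_const, ← map_prod, coeff_C_mul, coeff_X_pow]
    simp [eq_comm]
  rw [Finset.sum_congr rfl this, ← Finset.sum_filter, Finset.powersetCard_eq_filter]

lemma tup_mono (r : ℕ) (n : ℕ+) (t : Finset ℕ+) (ht : t ∈ Finset.powersetCard r (Finset.Iio n)) :
    StrictMono (Fin.snoc (α := fun _ => ℕ+)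
      (Finset.orderEmbOfFin t (Finset.mem_powersetCard.1 ht).2) n : Fin (r+1) → ℕ+) := by
  intro i j
  refine Fin.lastCases (fun h => ?_) (fun i => ?_) i
  · exact absurd h (not_lt.2 (Fin.le_last _))
  · refine Fin.lastCases (fun h => ?_) (fun j h => ?_) j
    · rw [Fin.snoc_castSucc, Fin.snoc_last]
      have := (Finset.mem_powersetCard.1 ht).1 (Finset.orderEmbOfFin_mem t (Finset.mem_powersetCard.1 ht).2 i)
      simpa using this
    · rw [Fin.snoc_castSucc, Fin.snoc_castSucc]
      exact (Finset.orderEmbOfFin t _).strictMono (by simpa using h)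

noncomputable def tup (r : ℕ) (x : Σ n : ℕ+, {t // t ∈ Finset.powersetCard r (Finset.Iio n)}) :
    {f : Fin (r+1) → ℕ+ // StrictMono f} :=
  ⟨Fin.snoc (α := fun _ => ℕ+) (Finset.orderEmbOfFin x.2.1 (Finset.mem_powersetCard.1 x.2.2).2) x.1,
    tup_mono r x.1 x.2.1 x.2.2⟩

lemma tup_bij (r : ℕ) : Function.Bijective (tup r) := by
  constructor
  · rintro ⟨n, t, ht⟩ ⟨n', t', ht'⟩ h
    have h := congrArg Subtype.val h
    simp only [tup] at h
    have hn : n = n' := by simpa using congrFun h (Fin.last r)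
    subst hn
    have : t = t' := by
      rw [← Finset.image_orderEmbOfFin_univ t (Finset.mem_powersetCard.1 ht).2,
        ← Finset.image_orderEmbOfFin_univ t' (Finset.mem_powersetCard.1 ht').2]
      congr 1
      ext i
      have := congrFun h i.castSucc
      rw [Fin.snoc_castSucc, Fin.snoc_castSucc] at this
      rw [this]
    subst this
    rfl
  · rintro ⟨f, hf⟩
    have hg : StrictMono (fun i : Fin r => f i.castSucc) := fun i j h => hf (by simpa using h)
    have hc : (Finset.univ.image (fun i : Fin r => f i.castSucc)).card = r := by
      rw [Finset.card_image_of_injective _ hg.injective]; simp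
    refine ⟨⟨f (Fin.last r), Finset.univ.image (fun i : Fin r => f i.castSucc), ?_⟩, ?_⟩
    · rw [Finset.mem_powersetCard]
      refine ⟨?_, hc⟩
      intro a ha
      obtain ⟨i, -, rfl⟩ := Finset.mem_image.1 ha
      rw [Finset.mem_Iio]
      exact hf (Fin.castSucc_lt_last i)
    · apply Subtype.ext
      have := Finset.orderEmbOfFin_unique hc (f := fun i : Fin r => f i.castSucc)
        (fun i => Finset.mem_image_of_mem _ (Finset.mem_univ i)) hg
      simp only [tup]
      rw [← this]
      funext i
      refine Fin.lastCases ?_ (fun i => ?_) i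
      · rw [Fin.snoc_last]
      · rw [Fin.snoc_castSucc]

noncomputable def LiG (N : ℕ) (w : Fin N → ℕ) (z : ℝ) : ℝ :=
  ∑' m : {f : Fin N → ℕ+ // StrictMono f},
    z ^ (if h : 0 < N then ((m.1 ⟨N - 1, Nat.sub_lt h Nat.one_pos⟩ : ℕ+) : ℕ) else 0)
      / ∏ i, (((m.1 i : ℕ+) : ℕ) : ℝ) ^ (w i)

lemma LiG_cast {N M : ℕ} (h : M = N) (w : Fin N → ℕ) (z : ℝ) :
    LiG N w z = LiG M (fun i => w (Fin.cast h i)) z := by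
  subst h; rfl

lemma LiL_eq (r k : ℕ) (z : ℝ) : LiL (List.replicate r 1 ++ [k+1]) z =
    LiG (r+1) (Fin.snoc (α := fun _ => ℕ) (fun _ => 1) (k+1)) z := by
  have h : r + 1 = (List.replicate r 1 ++ [k+1]).length := by simp
  have : LiL (List.replicate r 1 ++ [k+1]) z =
    LiG (List.replicate r 1 ++ [k+1]).length (List.replicate r 1 ++ [k+1]).get z := rfl
  rw [this, LiG_cast h]
  congr 1
  funext i
  refine Fin.lastCases ?_ (fun i => ?_) i
  · rw [Fin.snoc_last]; simp
  · rw [Fin.snoc_castSucc]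
    simp

lemma tup_term (r k : ℕ) (z : ℝ) (x : Σ n : ℕ+, {t // t ∈ Finset.powersetCard r (Finset.Iio n)}) :
    z ^ (if h : 0 < r+1 then (((tup r x).1 ⟨r+1 - 1, Nat.sub_lt h Nat.one_pos⟩ : ℕ+) : ℕ) else 0)
      / ∏ i, ((((tup r x).1 i : ℕ+) : ℕ) : ℝ) ^
        ((Fin.snoc (α := fun _ => ℕ) (fun _ => 1) (k+1) : Fin (r+1) → ℕ) i)
    = z ^ (x.1 : ℕ) * (1 / ((x.1:ℕ):ℝ)^(k+1)) * ∏ i ∈ x.2.1, 1 / ((i:ℕ):ℝ) := by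
  obtain ⟨n, t, ht⟩ := x
  have hlast : (⟨r+1-1, Nat.sub_lt (Nat.succ_pos r) Nat.one_pos⟩ : Fin (r+1)) = Fin.last r := rfl
  rw [dif_pos (Nat.succ_pos r), hlast, Fin.prod_univ_castSucc]
  simp only [tup, Fin.snoc_last, Fin.snoc_castSucc, pow_one]
  have : ∏ i : Fin r, (((Finset.orderEmbOfFin t (Finset.mem_powersetCard.1 ht).2 i : ℕ+) : ℕ) : ℝ)
      = ∏ i ∈ t, ((i:ℕ):ℝ) := by
    conv_rhs => rw [← Finset.map_orderEmbOfFin_univ t (Finset.mem_powersetCard.1 ht).2]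
    rw [Finset.prod_map]
    rfl
  rw [this]
  simp only [one_div, Finset.prod_inv_distrib]
  rw [div_eq_mul_inv, mul_inv]; ring

open PowerSeries in
lemma LiL_sum (r k : ℕ) (z : ℝ) (hz : 0 ≤ z) (hz1 : z < 1) :
    LiL (List.replicate r 1 ++ [k+1]) z =
    ∑' m : ℕ, z ^ (m+1) * (1 / ((m:ℝ)+1)^(k+1) * coeff r (Pp m)) := by
  rw [LiL_eq, LiG, ← (Equiv.ofBijective _ (tup_bij r)).tsum_eq]
  simp only [Equiv.ofBijective_apply, tup_term]
  have hfib : ∀ n : ℕ+, ∑' t : {t // t ∈ Finset.powersetCard r (Finset.Iio n)},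
      z ^ (n : ℕ) * (1 / ((n:ℕ):ℝ)^(k+1)) * ∏ i ∈ t.1, 1 / ((i:ℕ):ℝ) =
      z ^ (n:ℕ) * (1 / ((n:ℕ):ℝ)^(k+1) * coeff r (Pp (n.natPred))) := by
    intro n
    rw [tsum_mul_left, Finset.tsum_subtype (Finset.powersetCard r (Finset.Iio n))
      (fun t => ∏ i ∈ t, 1 / ((i:ℕ):ℝ)), esum r n.natPred n (by simp), mul_assoc]
  have hsN : Summable fun m : ℕ => z ^ (m+1) * (1 / ((m:ℝ)+1)^(k+1) * coeff r (Pp m)) := by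
    have hg := (summable_nat_add_iff 1).2 (summable_pow_mul_geometric_of_norm_lt_one r
      (r := z) (by rwa [Real.norm_of_nonneg hz]))
    refine Summable.of_nonneg_of_le (fun m => ?_) (fun m => ?_) hg
    · exact mul_nonneg (by positivity) (mul_nonneg (by positivity) (Pp_bound r m).1)
    · have h1 : (1:ℝ) ≤ (m:ℝ)+1 := by linarith [Nat.cast_nonneg (α := ℝ) m]
      have hH : HH m ≤ (m:ℝ)+1 := by
        have : HH m ≤ ∑ i ∈ Finset.range m, (1:ℝ) := by
          refine Finset.sum_le_sum fun i _ => ?_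
          rw [div_le_one (by positivity)]; linarith [Nat.cast_nonneg (α := ℝ) i]
        simp at this; linarith
      have hP : coeff r (Pp m) ≤ ((m:ℝ)+1)^r :=
        (Pp_bound r m).2.trans (pow_le_pow_left₀ (HH_nonneg _) hH _)
      have hk : 1 / ((m:ℝ)+1)^(k+1) ≤ 1 := by
        rw [div_le_one (by positivity)]; exact one_le_pow₀ h1
      push_cast
      rw [mul_comm]
      gcongr
      calc _ ≤ 1 * coeff r (Pp m) := mul_le_mul_of_nonneg_right hk (Pp_bound r m).1
        _ ≤ _ := by rw [one_mul]; exact hP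
  have hnat : (fun m : ℕ => z ^ (m+1) * (1 / ((m:ℝ)+1)^(k+1) * coeff r (Pp m))) =
      (fun n : ℕ+ => z ^ (n:ℕ) * (1 / ((n:ℕ):ℝ)^(k+1) * coeff r (Pp (n.natPred)))) ∘
        Equiv.pnatEquivNat.symm := by
    funext m
    simp
  have hsP : Summable (fun n : ℕ+ => z ^ (n:ℕ) * (1 / ((n:ℕ):ℝ)^(k+1) * coeff r (Pp (n.natPred)))) := by
    rw [hnat, Equiv.summable_iff] at hsN
    exact hsN
  rw [hnat]
  have e2 := Equiv.pnatEquivNat.symm.tsum_eq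
    (fun n : ℕ+ => z ^ (n:ℕ) * (1 / ((n:ℕ):ℝ)^(k+1) * coeff r (Pp (n.natPred))))
  refine Eq.trans ?_ e2.symm
  rw [Summable.tsum_sigma]
  · exact tsum_congr hfib
  · rw [summable_sigma_of_nonneg]
    · refine ⟨fun n => (hasSum_fintype _).summable, ?_⟩
      simp only [hfib]
      exact hsP
    · intro x
      have : 0 ≤ ∏ i ∈ x.2.1, 1 / ((i:ℕ):ℝ) := Finset.prod_nonneg fun i _ => by positivity
      positivity

open PowerSeries in
lemma xiL_sum (r k p : ℕ) : xiL (List.replicate r 1 ++ [k+1]) ((p:ℝ)+1) =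
    ∑' m : ℕ, 1 / ((m:ℝ)+1) ^ (k+1) * coeff r (Pp m) * Kk p m := by
  have hp : (p.factorial : ℝ) ≠ 0 := by positivity
  have hF : ∀ m : ℕ, ∫ t in Set.Ioi (0:ℝ), 1 / ((m:ℝ)+1) ^ (k+1) * coeff r (Pp m) * (t ^ p * wk m t)
      = p.factorial * (1 / ((m:ℝ)+1) ^ (k+1) * coeff r (Pp m) * Kk p m) := by
    intro m
    rw [integral_const_mul, Kk]
    field_simp
  have hc : ∀ m : ℕ, 0 ≤ 1 / ((m:ℝ)+1) ^ (k+1) * coeff r (Pp m) := fun m =>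
    mul_nonneg (by positivity) (Pp_bound r m).1
  have hs := hasSum_integral_of_summable_integral_norm
    (μ := volume.restrict (Set.Ioi (0:ℝ)))
    (F := fun (m : ℕ) (t : ℝ) => 1 / ((m:ℝ)+1) ^ (k+1) * coeff r (Pp m) * (t ^ p * wk m t))
    (fun m => (int_wk p m).const_mul _) (by
      have : ∀ m : ℕ, ∫ t in Set.Ioi (0:ℝ), ‖1 / ((m:ℝ)+1) ^ (k+1) * coeff r (Pp m) * (t ^ p * wk m t)‖
        = p.factorial * (1 / ((m:ℝ)+1) ^ (k+1) * coeff r (Pp m) * Kk p m) := by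
        intro m
        rw [← hF m]
        refine setIntegral_congr_fun measurableSet_Ioi fun t ht => ?_
        have ht : (0:ℝ) ≤ t := le_of_lt ht
        exact Real.norm_of_nonneg (mul_nonneg (hc m) (mul_nonneg (pow_nonneg ht _) (wk_nonneg m ht)))
      simp only [this]
      exact (summ_main r k p).mul_left _)
  have hs := hs.tsum_eq
  simp only [hF] at hs
  rw [tsum_mul_left] at hs
  have hI : ∫ t in Set.Ioi (0 : ℝ), t ^ (((p:ℝ)+1) - 1) / (Real.exp t - 1) *
      LiL (List.replicate r 1 ++ [k+1]) (1 - Real.exp (-t)) =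
      ∫ t in Set.Ioi (0:ℝ), ∑' m : ℕ, 1 / ((m:ℝ)+1) ^ (k+1) * coeff r (Pp m) * (t ^ p * wk m t) := by
    refine setIntegral_congr_fun measurableSet_Ioi fun t ht => ?_
    have ht : (0:ℝ) < t := ht
    have h1 : Real.exp (-t) < 1 := by simpa using ht
    have h2 : 1 < Real.exp t := Real.one_lt_exp_iff.2 ht
    have h3 : Real.exp t - 1 ≠ 0 := by linarith
    have h4 : (1 - Real.exp (-t)) / (Real.exp t - 1) = Real.exp (-t) := by
      rw [div_eq_iff h3, mul_sub, ← Real.exp_add]; simp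
    rw [LiL_sum r k _ (by linarith) (by linarith [Real.exp_pos (-t)]), ← tsum_mul_left]
    refine tsum_congr fun m => ?_
    rw [add_sub_cancel_right, Real.rpow_natCast, wk]
    rw [pow_succ]
    linear_combination t ^ p * (1 - Real.exp (-t)) ^ m *
      (1 / ((m:ℝ)+1) ^ (k+1) * coeff r (Pp m)) * h4
  rw [xiL, hI, ← hs, Real.Gamma_nat_eq_factorial]
  field_simp

open PowerSeries in
lemma triple_coeff (k m : ℕ) : ∑ f ∈ Finset.Nat.antidiagonalTuple 3 k,
    coeff (f 0) (Pp m) * coeff (f 1) (Dd m) * coeff (f 2) (Qq' m) = coeff k (Rr m) := by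
  rw [← triple, mul_assoc, coeff_mul]
  simp only [coeff_mul, Finset.mul_sum]
  rw [Finset.sum_sigma']
  refine Finset.sum_bij' (fun f _ => ⟨(f 0, f 1 + f 2), (f 1, f 2)⟩)
    (fun x _ => ![x.1.1, x.2.1, x.2.2]) ?_ ?_ ?_ ?_ ?_
  · intro f hf
    rw [Finset.Nat.mem_antidiagonalTuple, Fin.sum_univ_three] at hf
    simp; omega
  · rintro ⟨⟨a, b⟩, c, d⟩ h
    simp at h
    rw [Finset.Nat.mem_antidiagonalTuple, Fin.sum_univ_three]
    simp; omega
  · intro f hf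
    funext i; fin_cases i <;> simp
  · rintro ⟨⟨a, b⟩, c, d⟩ h
    simp at h
    obtain ⟨h1, h2⟩ := h
    subst h2
    simp
  · intro f hf
    simp [mul_assoc]

open PowerSeries in
lemma main_sum (k : ℕ) : ∑ f ∈ Finset.Nat.antidiagonalTuple 3 k,
    (-1 : ℝ) ^ (f 2) * xiL (List.replicate (f 0) 1 ++ [f 1 + 1]) ((f 2 : ℝ) + 1) =
    ∑' m : ℕ, 1 / ((m:ℝ)+1)^2 * coeff k (Rr m) := by
  simp only [xiL_sum, ← tsum_mul_left]
  rw [← Summable.tsum_finsetSum (fun f _ => (summ_main _ _ _).mul_left _)]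
  refine tsum_congr fun m => ?_
  rw [← triple_coeff, Finset.mul_sum]
  refine Finset.sum_congr rfl fun f _ => ?_
  simp only [Dd, Qq', coeff_mk]
  have : (m:ℝ)+1 ≠ 0 := by positivity
  field_simp
  ring

theorem stmt5 (k : ℕ) :
    (Even k →
      ∑ f ∈ Finset.Nat.antidiagonalTuple 3 k,
          (-1 : ℝ) ^ (f 2) * xiL (List.replicate (f 0) 1 ++ [f 1 + 1]) ((f 2 : ℝ) + 1) =
        rz (k + 2)) ∧
    (Odd k →
      ∑ f ∈ Finset.Nat.antidiagonalTuple 3 k,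
          (-1 : ℝ) ^ (f 2) * xiL (List.replicate (f 0) 1 ++ [f 1 + 1]) ((f 2 : ℝ) + 1) = 0) := by
  rw [main_sum]
  constructor
  · intro hk
    rw [rz, ← Equiv.pnatEquivNat.symm.tsum_eq]
    refine tsum_congr fun m => ?_
    simp only [Rr, PowerSeries.coeff_mk, if_pos hk]
    simp
    rw [pow_add]
    field_simp
  · intro hk
    simp [Rr, Nat.not_even_iff_odd.2 hk]
end

section
/- For integers $r \geq 1$ and $k \geq 0$: $\sum_{k_1+\cdots+k_{r+1}=k} (-1)^{k_{r+1}}\, \xi(k_1+1,\ldots,k_r+1; k_{r+1}+1) = \sum_{a+2b=k} (-1)^a \binom{a+r-1}{r-1} \zeta^{\star}(a+r+1, \{2\}^b)$, where the left sum is over nonnegative integers $k_1,\ldots,k_{r+1}$ summing to $k$ and the right sum over nonnegative integers $a, b$ with $a+2b=k$. -/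
open scoped BigOperators
open MeasureTheory

open Filter Topology

namespace AKProof

lemma tele (f : ℕ → ℝ) (l : ℝ) (h : ∀ i, f (i+1) ≤ f i) (hl : Tendsto f atTop (𝓝 l)) :
    HasSum (fun i => f i - f (i+1)) (f 0 - l) := by
  rw [hasSum_iff_tendsto_nat_of_nonneg (fun i => sub_nonneg.2 (h i))]
  simp_rw [Finset.sum_range_sub']
  exact tendsto_const_nhds.sub hl

lemma tele_inv (n : ℕ) :
    HasSum (fun i : ℕ => 1 / ((n + i : ℕ) + 1 : ℝ) - 1 / ((n + (i+1) : ℕ) + 1 : ℝ)) (1 / ((n:ℝ) + 1)) := by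
  have := tele (fun i : ℕ => 1 / ((n + i : ℕ) + 1 : ℝ)) 0 ?_ ?_
  · simpa using this
  · intro i
    apply one_div_le_one_div_of_le
    · positivity
    · push_cast; linarith
  · have h := (tendsto_one_div_add_atTop_nhds_zero_nat (𝕜 := ℝ)).comp (tendsto_add_atTop_nat n)
    refine h.congr fun i => ?_
    simp [add_comm]

lemma sq_le (n : ℕ) : 1 / ((n:ℝ) + 1)^2 ≤ 2 * (1 / ((n:ℝ)+1) - 1 / ((n:ℝ) + 1 + 1)) := by
  have h : 2 * (1 / ((n:ℝ)+1) - 1 / ((n:ℝ) + 1 + 1)) - 1 / ((n:ℝ) + 1)^2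
      = n / (((n:ℝ)+1)^2 * (n+1+1)) := by
    field_simp; ring
  have : 0 ≤ n / (((n:ℝ)+1)^2 * (n+1+1)) := by positivity
  linarith

/-- tail star sums: `H b n` is the sum over `n+1 ≤ m_1 ≤ ... ≤ m_b`. -/
noncomputable def H : ℕ → ℕ → ℝ
  | 0, _ => 1
  | b+1, n => ∑' i : ℕ, H b (n+i) / (((n + i : ℕ) : ℝ) + 1)^2

lemma H_aux (b : ℕ) : ∀ n, 0 ≤ H b n ∧ H b n ≤ 2^b ∧
    Summable (fun i : ℕ => H b (n+i) / (((n + i : ℕ) : ℝ) + 1)^2) ∧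
    H (b+1) n ≤ 2^(b+1) / ((n:ℝ)+1) := by
  have step : (∀ n, 0 ≤ H b n ∧ H b n ≤ 2^b) → ∀ n, 
    Summable (fun i : ℕ => H b (n+i) / (((n + i : ℕ) : ℝ) + 1)^2) ∧
    H (b+1) n ≤ 2^(b+1) / ((n:ℝ)+1) := by
    intro hb n
    have hs := (tele_inv n).mul_left (2^(b+1) : ℝ)
    have hle : ∀ i : ℕ, H b (n+i) / (((n + i : ℕ) : ℝ) + 1)^2 ≤ 
        2^(b+1) * (1 / ((n + i : ℕ) + 1 : ℝ) - 1 / ((n + (i+1) : ℕ) + 1 : ℝ)) := by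
      intro i
      have h1 := sq_le (n+i)
      have h2 := hb (n+i)
      rw [div_eq_mul_one_div]
      calc _ ≤ 2^b * (1 / (((n + i : ℕ) : ℝ) + 1)^2) := by
            gcongr; exact h2.2
        _ ≤ 2^b * (2 * (1 / (((n+i:ℕ):ℝ)+1) - 1 / (((n+i:ℕ):ℝ) + 1 + 1))) := by gcongr
        _ = _ := by push_cast; ring
    have hsum : Summable (fun i : ℕ => H b (n+i) / (((n + i : ℕ) : ℝ) + 1)^2) :=
      Summable.of_nonneg_of_le (fun i => div_nonneg (hb _).1 (by positivity)) hle hs.summable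
    refine ⟨hsum, ?_⟩
    have := hsum.tsum_le_tsum hle hs.summable
    rw [hs.tsum_eq] at this
    rw [H]
    refine this.trans (le_of_eq (by ring))
  have key : ∀ n, 0 ≤ H b n ∧ H b n ≤ 2^b := by
    clear step
    induction b with
    | zero => intro n; simp [H]
    | succ b ih =>
      intro n
      have hb := ih
      have hs := (tele_inv n).mul_left (2^(b+1) : ℝ)
      have hle : ∀ i : ℕ, H b (n+i) / (((n + i : ℕ) : ℝ) + 1)^2 ≤ 
          2^(b+1) * (1 / ((n + i : ℕ) + 1 : ℝ) - 1 / ((n + (i+1) : ℕ) + 1 : ℝ)) := by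
        intro i
        have h1 := sq_le (n+i)
        have h2 := hb (n+i)
        rw [div_eq_mul_one_div]
        calc _ ≤ 2^b * (1 / (((n + i : ℕ) : ℝ) + 1)^2) := by
              gcongr; exact h2.2
          _ ≤ 2^b * (2 * (1 / (((n+i:ℕ):ℝ)+1) - 1 / (((n+i:ℕ):ℝ) + 1 + 1))) := by gcongr
          _ = _ := by push_cast; ring
      have hsum : Summable (fun i : ℕ => H b (n+i) / (((n + i : ℕ) : ℝ) + 1)^2) :=
        Summable.of_nonneg_of_le (fun i => div_nonneg (hb _).1 (by positivity)) hle hs.summable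
      rw [H]
      refine ⟨tsum_nonneg (fun i => div_nonneg (hb _).1 (by positivity)), ?_⟩
      have := hsum.tsum_le_tsum hle hs.summable
      rw [hs.tsum_eq] at this
      refine this.trans ?_
      have : 1 / ((n:ℝ)+1) ≤ 1 := by
        rw [div_le_one (by positivity)]; linarith [(Nat.cast_nonneg n : (0:ℝ) ≤ n)]
      calc _ ≤ (2:ℝ)^(b+1) * 1 := by gcongr
        _ = _ := by ring
  exact fun n => ⟨(key n).1, (key n).2, step key n⟩

lemma H_nonneg (b n : ℕ) : 0 ≤ H b n := (H_aux b n).1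
lemma H_le (b n : ℕ) : H b n ≤ 2^b := (H_aux b n).2.1
lemma H_summable (b n : ℕ) : 
    Summable (fun i : ℕ => H b (n+i) / (((n + i : ℕ) : ℝ) + 1)^2) := (H_aux b n).2.2.1
lemma H_succ_le (b n : ℕ) : H (b+1) n ≤ 2^(b+1) / ((n:ℝ)+1) := (H_aux b n).2.2.2

lemma H_rec (b n : ℕ) : H (b+1) n = H (b+1) (n+1) + H b n / ((n:ℝ)+1)^2 := by
  rw [H, (H_summable b n).tsum_eq_zero_add, H, add_comm]
  congr 1
  refine tsum_congr fun i => ?_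
  rw [show n + (i+1) = n+1+i by ring]

noncomputable def P (x : ℝ) (n : ℕ) : ℝ := ∑' b, x^(2*b) * H b n


lemma geo {x : ℝ} (hx0 : 0 < x) (hx : x < 1/2) :
    HasSum (fun b : ℕ => (2*x^2)^b) (1 - 2*x^2)⁻¹ :=
  hasSum_geometric_of_lt_one (by positivity) (by nlinarith)

lemma geo_le {x : ℝ} (hx0 : 0 < x) (hx : x < 1/2) : (1 - 2*x^2)⁻¹ ≤ 2 := by
  rw [inv_le_comm₀ (by nlinarith) (by norm_num)]; nlinarith

lemma PH_le {x : ℝ} (b n : ℕ) : x^(2*b) * H b n ≤ (2*x^2)^b := by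
  rw [mul_pow, pow_mul, mul_comm]
  have := H_le b n
  gcongr

lemma P_summable {x : ℝ} (hx0 : 0 < x) (hx : x < 1/2) (n : ℕ) :
    Summable (fun b => x^(2*b) * H b n) :=
  Summable.of_nonneg_of_le (fun b => mul_nonneg (by positivity) (H_nonneg b n))
    (fun b => PH_le b n) (geo hx0 hx).summable

lemma P_le {x : ℝ} (hx0 : 0 < x) (hx : x < 1/2) (n : ℕ) : P x n ≤ 2 := by
  have := (P_summable hx0 hx n).tsum_le_tsum (fun b => PH_le b n) (geo hx0 hx).summable
  rw [(geo hx0 hx).tsum_eq] at this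
  exact this.trans (geo_le hx0 hx)

lemma P_eq {x : ℝ} (hx0 : 0 < x) (hx : x < 1/2) (n : ℕ) :
    P x n = 1 + ∑' b, x^(2*(b+1)) * H (b+1) n := by
  rw [P, (P_summable hx0 hx n).tsum_eq_zero_add]; simp [H]

lemma P_pos {x : ℝ} (hx0 : 0 < x) (hx : x < 1/2) (n : ℕ) : 0 < P x n := by
  rw [P_eq hx0 hx]
  have : 0 ≤ ∑' b, x^(2*(b+1)) * H (b+1) n :=
    tsum_nonneg fun b => mul_nonneg (by positivity) (H_nonneg _ n)
  linarith

lemma P_rec {x : ℝ} (hx0 : 0 < x) (hx : x < 1/2) (n : ℕ) :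
    P x n * (((n:ℝ)+1)^2 - x^2) = P x (n+1) * ((n:ℝ)+1)^2 := by
  have h1 : P x n = P x (n+1) + x^2 / ((n:ℝ)+1)^2 * P x n := by
    conv_lhs => rw [P_eq hx0 hx]
    rw [P_eq hx0 hx (n+1)]
    have e : ∀ b, x^(2*(b+1)) * H (b+1) n = x^(2*(b+1)) * H (b+1) (n+1) +
        x^2 / ((n:ℝ)+1)^2 * (x^(2*b) * H b n) := by
      intro b; rw [H_rec]; ring
    simp_rw [e]
    rw [Summable.tsum_add, tsum_mul_left, P]
    · ring
    · exact (summable_nat_add_iff 1).2 (P_summable hx0 hx (n+1))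
    · exact (P_summable hx0 hx n).mul_left _
  field_simp at h1
  linarith

lemma P_tendsto {x : ℝ} (hx0 : 0 < x) (hx : x < 1/2) : Tendsto (P x) atTop (𝓝 1) := by
  have h2 : ∀ n, P x n ≤ 1 + 2 * (1 / ((n:ℝ)+1)) := by
    intro n
    rw [P_eq hx0 hx]
    have hs := ((summable_nat_add_iff 1).2 (geo hx0 hx).summable).mul_right (1/((n:ℝ)+1))
    have := ((summable_nat_add_iff 1).2 (P_summable hx0 hx n)).tsum_le_tsum (g := fun b => (2*x^2)^(b+1) * (1/((n:ℝ)+1))) (fun b => by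
      have := H_succ_le b n
      calc _ ≤ x^(2*(b+1)) * (2^(b+1) / ((n:ℝ)+1)) := by gcongr
        _ = _ := by rw [mul_pow, pow_mul]; ring) hs
    rw [tsum_mul_right] at this
    have h3 := (geo hx0 hx).summable.tsum_eq_zero_add
    rw [(geo hx0 hx).tsum_eq] at h3
    have h4 := geo_le hx0 hx
    have : (∑' (b : ℕ), (2 * x ^ 2) ^ (b + 1)) * (1 / ((n:ℝ)+1)) ≤ 2 * (1 / ((n:ℝ)+1)) := by
      gcongr
      simp at h3
      linarith
    linarith
  have h1 : ∀ n, 1 ≤ P x n := by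
    intro n
    rw [P_eq hx0 hx]
    have : 0 ≤ ∑' b, x^(2*(b+1)) * H (b+1) n :=
      tsum_nonneg fun b => mul_nonneg (by positivity) (H_nonneg _ n)
    linarith
  refine tendsto_of_tendsto_of_tendsto_of_le_of_le tendsto_const_nhds ?_ h1 h2
  have := ((tendsto_one_div_add_atTop_nhds_zero_nat (𝕜 := ℝ)).const_mul 2).const_add 1
  simpa using this

/-- connector -/
noncomputable def u (x : ℝ) (m n : ℕ) : ℝ :=
  P x n * n.factorial * (∏ j ∈ Finset.range m, ((j:ℝ) + 1 - x)) / (m + n + 1).factorial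

lemma u_pos {x : ℝ} (hx0 : 0 < x) (hx : x < 1/2) (m n : ℕ) : 0 < u x m n := by
  unfold u
  have := P_pos hx0 hx n
  have : 0 < ∏ j ∈ Finset.range m, ((j:ℝ) + 1 - x) := 
    Finset.prod_pos fun j _ => by linarith [(Nat.cast_nonneg j : (0:ℝ) ≤ j)]
  positivity

lemma u_succ (x : ℝ) (m n : ℕ) : u x (m+1) n * ((m:ℝ) + n + 2) = u x m n * ((m:ℝ) + 1 - x) := by
  unfold u
  rw [Finset.prod_range_succ, show m + 1 + n + 1 = (m+n+1)+1 by ring, Nat.factorial_succ (m+n+1)]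
  push_cast
  have : ((m + n + 1).factorial : ℝ) ≠ 0 := by positivity
  have : (m:ℝ) + n + 1 + 1 ≠ 0 := by positivity
  field_simp
  ring

lemma prod_le {x : ℝ} (hx0 : 0 < x) (hx : x < 1/2) (m : ℕ) : 
    (∏ j ∈ Finset.range m, ((j:ℝ) + 1 - x)) ≤ m.factorial := by
  rw [← Finset.prod_range_add_one_eq_factorial]
  push_cast
  apply Finset.prod_le_prod
  · intro j _;  linarith [(Nat.cast_nonneg j : (0:ℝ) ≤ j)]
  · intro j _; linarith

lemma u_tendsto {x : ℝ} (hx0 : 0 < x) (hx : x < 1/2) (n : ℕ) :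
    Tendsto (fun m => u x m n) atTop (𝓝 0) := by
  have h : ∀ m, u x m n ≤ P x n * n.factorial * (1 / ((m:ℝ)+1)) := by
    intro m
    unfold u
    rw [mul_div_assoc]
    have hP := P_pos hx0 hx n
    refine mul_le_mul_of_nonneg_left ?_ (by positivity)
    rw [div_le_div_iff₀ (by positivity) (by positivity), one_mul]
    calc _ ≤ (m.factorial : ℝ) * (m+1) := by gcongr; exact prod_le hx0 hx m
      _ = ((m+1).factorial : ℝ) := by rw [Nat.factorial_succ]; push_cast; ring
      _ ≤ _ := by exact_mod_cast Nat.factorial_le (by omega)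
  refine tendsto_of_tendsto_of_tendsto_of_le_of_le tendsto_const_nhds ?_ (fun m => (u_pos hx0 hx m n).le) h
  have := (tendsto_one_div_add_atTop_nhds_zero_nat (𝕜 := ℝ)).const_mul (P x n * n.factorial)
  simpa using this

lemma transport {x : ℝ} (hx0 : 0 < x) (hx : x < 1/2) (a n : ℕ) :
    HasSum (fun i : ℕ => u x (a+i+1) n / (((a+i:ℕ):ℝ) + 1 - x)) (u x a n / ((n:ℝ) + 1 + x)) := by
  have e : ∀ m : ℕ, u x m n - u x (m+1) n = ((n:ℝ)+1+x) * (u x (m+1) n / ((m:ℝ) + 1 - x)) := by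
    intro m
    have h := u_succ x m n
    have : (m:ℝ) + 1 - x ≠ 0 := by
      have : (0:ℝ) ≤ m := Nat.cast_nonneg m
      linarith
    field_simp
    linarith
  have hpos : ∀ m : ℕ, 0 ≤ u x (m+1) n / ((m:ℝ) + 1 - x) := fun m => by
      have : (0:ℝ) ≤ m := Nat.cast_nonneg m
      exact div_nonneg (u_pos hx0 hx _ _).le (by linarith)
  have hn : (0:ℝ) < (n:ℝ) + 1 + x := by positivity
  have := tele (fun i => u x (a+i) n) 0 ?_ ?_
  · have := this.mul_left ((n:ℝ)+1+x)⁻¹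
    simp only [← add_assoc, e] at this
    have e1 : u x a n / ((n:ℝ) + 1 + x) = ((n:ℝ) + 1 + x)⁻¹ * (u x (a + 0) n - 0) := by
      rw [add_zero, sub_zero]; ring
    have e2 : (fun i : ℕ => u x (a+i+1) n / (((a+i:ℕ):ℝ) + 1 - x)) = 
        fun i : ℕ => ((n:ℝ) + 1 + x)⁻¹ * (((n:ℝ) + 1 + x) * (u x (a + i + 1) n / (((a + i : ℕ):ℝ) + 1 - x))) := by
      ext i; rw [inv_mul_cancel_left₀ hn.ne']
    rw [e1, e2]
    exact this
  · intro i
    have h1 := e (a+i)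
    have h2 := mul_nonneg hn.le (hpos (a+i))
    show u x (a+i+1) n ≤ _
    linarith
  · exact (u_tendsto hx0 hx n).comp (tendsto_add_atTop_nat a |>.congr fun i => add_comm _ _)

lemma prodRange_ne {x : ℝ} (hx : x < 1/2) (m : ℕ) : (m:ℝ) + 1 - x ≠ 0 := by
  have : (0:ℝ) ≤ m := Nat.cast_nonneg m
  linarith

/-- Gauss sum recursion -/
lemma u_summable {x : ℝ} (hx0 : 0 < x) (hx : x < 1/2) (m : ℕ) : Summable (fun n => u x (m+1) n) := by
  have hs := (tele_inv 0).summable.mul_left (2 * (m+1).factorial : ℝ)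
  refine Summable.of_nonneg_of_le (fun n => (u_pos hx0 hx _ _).le) (fun n => ?_) hs
  unfold u
  have h1 := P_le hx0 hx n
  have h2 := prod_le hx0 hx (m+1)
  have h3 : ((n+2).factorial : ℝ) ≤ (m+1+n+1).factorial := by
    exact_mod_cast Nat.factorial_le (by omega)
  have h0 : 0 < ∏ j ∈ Finset.range (m+1), ((j:ℝ) + 1 - x) := 
    Finset.prod_pos fun j _ => by linarith [(Nat.cast_nonneg j : (0:ℝ) ≤ j)]
  calc _ ≤ 2 * (n.factorial : ℝ) * (m+1).factorial / (n+2).factorial := by gcongr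
    _ = _ := by
      rw [Nat.factorial_succ (n+1), Nat.factorial_succ n]
      push_cast
      have : (n.factorial : ℝ) ≠ 0 := by positivity
      field_simp
      ring

lemma gauss_one {x : ℝ} (hx0 : 0 < x) (hx : x < 1/2) : HasSum (fun n => u x 1 n) (1/(1+x)) := by
  have hs := u_summable hx0 hx 0
  have h1 := hs.hasSum.tendsto_sum_nat
  have e : ∀ n : ℕ, (1+x) * u x 1 n = P x (n+1) * ((n+1:ℝ)/(n+1+1)) - P x n * ((n:ℝ)/(n+1)) := by
    intro n
    have hr := P_rec hx0 hx n
    unfold u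
    rw [show 1 + n + 1 = n+1+1 by ring, Nat.factorial_succ (n+1), Nat.factorial_succ n]
    have : (n.factorial : ℝ) ≠ 0 := by positivity
    push_cast
    simp
    field_simp
    linear_combination hr
  have h2 : Tendsto (fun N => ∑ n ∈ Finset.range N, (1+x) * u x 1 n) atTop (𝓝 1) := by
    have e2 : ∀ N : ℕ, ∑ n ∈ Finset.range N, (1+x) * u x 1 n = P x N * ((N:ℝ)/(N+1)) := by
      intro N
      simp_rw [e]
      have := Finset.sum_range_sub (fun n : ℕ => P x n * ((n:ℝ)/(n+1))) N
      push_cast at this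
      rw [this]; simp
    simp_rw [e2]
    simpa using (P_tendsto hx0 hx).mul (tendsto_natCast_div_add_atTop (1:ℝ))
  have h3 := h1.const_mul (1+x)
  simp_rw [Finset.mul_sum] at h3
  have := tendsto_nhds_unique h3 h2
  rw [show 1/(1+x) = ∑' n, u x 1 n by field_simp; linarith]
  exact hs.hasSum

lemma gauss_succ {x : ℝ} (hx0 : 0 < x) (hx : x < 1/2) (m : ℕ) :
    (∑' n, u x (m+2) n) * ((m:ℝ) + 2 + x) = (m+1) * ∑' n, u x (m+1) n := by
  have hs := u_summable hx0 hx m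
  have hs2 := u_summable hx0 hx (m+1)
  have hd := ((hs.mul_left ((m:ℝ)+1)).sub (hs2.mul_right ((m:ℝ)+2+x)))
  have h1 := hd.hasSum.tendsto_sum_nat
  have e : ∀ n : ℕ, ((m:ℝ)+1) * u x (m+1) n - u x (m+1+1) n * ((m:ℝ)+2+x) =
      (n : ℝ) * u x (m+1) n - ((n+1:ℕ):ℝ) * u x (m+1) (n+1) := by
    intro n
    have hr := P_rec hx0 hx n
    have h2 := u_succ x (m+1) n
    have h3 : u x (m+1) (n+1) * ((n+1) * (m+n+3)) = u x (m+1) n * ((n+1)^2 - x^2) := by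
      unfold u
      rw [show m + 1 + (n+1) + 1 = (m+1+n+1)+1 by ring, Nat.factorial_succ (m+1+n+1), Nat.factorial_succ n]
      push_cast
      have : ((m + 1 + n + 1).factorial : ℝ) ≠ 0 := by positivity
      have : (m:ℝ) + 1 + n + 1 + 1 ≠ 0 := by positivity
      field_simp
      linear_combination (-(m:ℝ)-n-3) * (∏ j ∈ Finset.range (m+1), ((j:ℝ) + 1 - x)) * hr
    push_cast at h2 ⊢
    have h4 : (m:ℝ) + n + 3 ≠ 0 := by positivity
    apply mul_right_cancel₀ h4
    linear_combination h3 - (m+2+x) * h2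
  have h2 : Tendsto (fun N : ℕ => (N:ℝ) * u x (m+1) N) atTop (𝓝 0) := by
    have hb : ∀ N : ℕ, (N:ℝ) * u x (m+1) N ≤ 2 * (m+1).factorial * (1 / ((N:ℝ)+1)) := by
      intro n
      unfold u
      have h1 := P_le hx0 hx n
      have hP := P_pos hx0 hx n
      have h2 := prod_le hx0 hx (m+1)
      have h3 : ((n+2).factorial : ℝ) ≤ (m+1+n+1).factorial := by
        exact_mod_cast Nat.factorial_le (by omega)
      have h0 : 0 < ∏ j ∈ Finset.range (m+1), ((j:ℝ) + 1 - x) := 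
        Finset.prod_pos fun j _ => by linarith [(Nat.cast_nonneg j : (0:ℝ) ≤ j)]
      calc _ ≤ ((n:ℝ)+2) * (2 * (n.factorial : ℝ) * (m+1).factorial / (n+2).factorial) := by 
            gcongr; linarith
        _ = _ := by
          rw [Nat.factorial_succ (n+1), Nat.factorial_succ n]
          push_cast
          have : (n.factorial : ℝ) ≠ 0 := by positivity
          field_simp
          ring
    refine tendsto_of_tendsto_of_tendsto_of_le_of_le tendsto_const_nhds ?_ 
      (fun N => mul_nonneg (by positivity) (u_pos hx0 hx _ _).le) hb
    have := (tendsto_one_div_add_atTop_nhds_zero_nat (𝕜 := ℝ)).const_mul (2 * (m+1).factorial : ℝ)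
    simpa using this
  simp_rw [e] at h1
  simp_rw [Finset.sum_range_sub' (fun n : ℕ => (n : ℝ) * u x (m+1) n)] at h1
  have h3 := tendsto_nhds_unique h1 (h2.const_sub _)
  simp only [← e] at h3
  rw [Summable.tsum_sub (hs.mul_left ((m:ℝ)+1)) (hs2.mul_right ((m:ℝ)+2+x)), tsum_mul_left, tsum_mul_right] at h3
  simp at h3
  linarith

noncomputable def I : ℕ → ℕ → ℝ
  | _, 0 => 0
  | 0, m+1 => 1/((m:ℝ)+1)
  | j+1, m+1 => ((m:ℝ) * I (j+1) m + I j (m+1))/((m:ℝ)+1)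
termination_by j m => (j, m)

noncomputable def G : ℕ → ℝ
  | 0 => 4
  | 1 => 2
  | m+2 => ((m:ℝ)+1)/((m:ℝ)+3/2) * G (m+1)

lemma G_pos : ∀ m, 0 < G m
  | 0 => by simp [G]
  | 1 => by simp [G]
  | m+2 => by have := G_pos (m+1); rw [G]; positivity

lemma G_step : ∀ m : ℕ, G (m+1) / ((m:ℝ)+1/2) ≤ 2 * (G m - G (m+1))
  | 0 => by norm_num [G]
  | m+1 => by
    have h := G_pos (m+1)
    have e : G (m+1+1) = ((m:ℝ)+1)/((m:ℝ)+3/2) * G (m+1) := by rw [G]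
    rw [e]
    push_cast
    rw [div_le_iff₀ (by positivity)]
    have : 2 * (G (m+1) - (((m:ℝ)+1)/((m:ℝ)+3/2) * G (m+1))) * ((m:ℝ)+1+1/2) - (((m:ℝ)+1)/((m:ℝ)+3/2) * G (m+1))
      = (1/2) * (G (m+1) / (m+3/2)) := by
      field_simp; ring
    have : 0 ≤ (1/2) * (G (m+1) / ((m:ℝ)+3/2)) := by positivity
    linarith

lemma G_partial (a N : ℕ) : ∑ i ∈ Finset.range N, G (a+i+1) / (((a+i:ℕ):ℝ)+1/2) ≤ 2 * G a := by
  calc _ ≤ ∑ i ∈ Finset.range N, (2 * G (a+i) - 2 * G (a+(i+1))) :=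
        Finset.sum_le_sum fun i _ => by have := G_step (a+i); rw [← add_assoc]; linarith
    _ = 2 * G (a+0) - 2 * G (a+N) := by
      rw [Finset.sum_range_sub' (fun i => 2 * G (a+i))]
    _ ≤ _ := by have := G_pos (a+N); simp; linarith

lemma G_term_nonneg (a i : ℕ) : 0 ≤ G (a+i+1) / (((a+i:ℕ):ℝ)+1/2) := by
  have := G_pos (a+i+1); positivity

lemma G_summable (a : ℕ) : Summable (fun i : ℕ => G (a+i+1) / (((a+i:ℕ):ℝ)+1/2)) :=
  summable_of_sum_range_le (G_term_nonneg a) (G_partial a)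

lemma G_tsum (a : ℕ) : ∑' i : ℕ, G (a+i+1) / (((a+i:ℕ):ℝ)+1/2) ≤ 2 * G a :=
  Real.tsum_le_of_sum_range_le (G_term_nonneg a) (G_partial a)

lemma I_nonneg (j m : ℕ) : 0 ≤ I j m := by
  induction j, m using I.induct with
  | case1 j => rw [I]
  | case2 m => rw [I]; positivity
  | case3 j m h1 h2 => rw [I]; positivity

lemma I_le (j m : ℕ) : I j m ≤ 2^j * G m := by
  induction j, m using I.induct with
  | case1 j => rw [I, G]; positivity
  | case2 m =>
    rw [I]
    induction m with
    | zero => norm_num [G]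
    | succ m ih =>
      have e : G (m+1+1) = ((m:ℝ)+1)/((m:ℝ)+3/2) * G (m+1) := by rw [G]
      rw [e]
      simp only [pow_zero, one_mul] at ih ⊢
      calc _ ≤ ((m:ℝ)+1)/((m:ℝ)+3/2) * (1/((m:ℝ)+1)) := by
            push_cast; field_simp; linarith
        _ ≤ _ := by gcongr
  | case3 j m h1 h2 =>
    rw [I, div_le_iff₀ (by positivity)]
    rcases m with _ | m
    · norm_num [G] at h2 ⊢
      have : (2:ℝ)^(j+1) = 2 * 2^j := by ring
      have : (0:ℝ) < 2^j := by positivity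
      linarith
    · have e : G (m+1+1) = ((m:ℝ)+1)/((m:ℝ)+3/2) * G (m+1) := by rw [G]
      have e' : G (m+1+1) * ((m:ℝ)+3/2) = ((m:ℝ)+1) * G (m+1) := by rw [e]; field_simp
      push_cast
      calc _ ≤ ((m:ℝ)+1) * (2^(j+1) * G (m+1)) + 2^j * G (m+1+1) := by gcongr
        _ = 2^(j+1) * (((m:ℝ)+1) * G (m+1)) + 2^j * G (m+1+1) := by ring
        _ = _ := by rw [← e', show (m+1).succ = m+1+1 from rfl, show j.succ = j+1 from rfl]; ring

noncomputable def X : List ℕ → ℕ → ℕ → ℝ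
  | [], j, a => I j a
  | k :: l, j, a => ∑' i : ℕ, X l j (a+i+1) / (((a+i:ℕ):ℝ)+1)^k

lemma X_aux (k : ℕ) (hk : 1 ≤ k) (C : ℝ) (hC : 0 ≤ C) (F : ℕ → ℝ) 
    (hF : ∀ a, 0 ≤ F a ∧ F a ≤ C * G a) (a : ℕ) :
    Summable (fun i : ℕ => F (a+i+1) / (((a+i:ℕ):ℝ)+1)^k) ∧
    0 ≤ ∑' i : ℕ, F (a+i+1) / (((a+i:ℕ):ℝ)+1)^k ∧
    ∑' i : ℕ, F (a+i+1) / (((a+i:ℕ):ℝ)+1)^k ≤ (2 * C) * G a := by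
  have hle : ∀ i : ℕ, F (a+i+1) / (((a+i:ℕ):ℝ)+1)^k ≤ C * (G (a+i+1) / (((a+i:ℕ):ℝ)+1/2)) := by
    intro i
    have := (hF (a+i+1)).2
    have hG := G_pos (a+i+1)
    rw [← mul_div_assoc]
    gcongr
    calc (((a+i:ℕ):ℝ)+1/2) ≤ (((a+i:ℕ):ℝ)+1)^1 := by linarith
      _ ≤ _ := by
        apply pow_le_pow_right₀ _ hk
        have : (0:ℝ) ≤ ((a+i:ℕ):ℝ) := by positivity
        linarith
  have h0 : ∀ i : ℕ, 0 ≤ F (a+i+1) / (((a+i:ℕ):ℝ)+1)^k := fun i =>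
    div_nonneg (hF _).1 (by positivity)
  have hs := Summable.of_nonneg_of_le h0 hle ((G_summable a).mul_left C)
  refine ⟨hs, tsum_nonneg h0, ?_⟩
  have := hs.tsum_le_tsum hle ((G_summable a).mul_left C)
  rw [tsum_mul_left] at this
  have h2 := mul_le_mul_of_nonneg_left (G_tsum a) hC
  linarith

lemma X_bound (j : ℕ) : ∀ (l : List ℕ), (∀ k ∈ l, 1 ≤ k) → 
    ∃ C : ℝ, 0 ≤ C ∧ ∀ a, 0 ≤ X l j a ∧ X l j a ≤ C * G a
  | [], _ => ⟨2^j, by positivity, fun a => ⟨I_nonneg j a, I_le j a⟩⟩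
  | k :: l, h => by
    obtain ⟨C, hC, hF⟩ := X_bound j l (fun k hk => h k (List.mem_cons_of_mem _ hk))
    refine ⟨2*C, by positivity, fun a => ?_⟩
    exact (X_aux k (h k (by simp)) C hC (X l j) hF a).2

lemma X_summable (j k : ℕ) (l : List ℕ) (h : ∀ k ∈ l, 1 ≤ k) (hk : 1 ≤ k) (a : ℕ) :
    Summable (fun i : ℕ => X l j (a+i+1) / (((a+i:ℕ):ℝ)+1)^k) := by
  obtain ⟨C, hC, hF⟩ := X_bound j l h
  exact (X_aux k hk C hC (X l j) hF a).1

noncomputable def V (r k a : ℕ) : ℝ :=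
  ∑ f ∈ Finset.Nat.antidiagonalTuple (r + 1) k,
        (-1 : ℝ) ^ (f (Fin.last r)) *
          X (List.ofFn fun i : Fin r => f i.castSucc + 1) (f (Fin.last r)) a

lemma V_zero (k a : ℕ) : V 0 k a = (-1)^k * I k a := by
  simp [V, X]

lemma sum_tuple_succ (n k : ℕ) (F : (Fin (n+1) → ℕ) → ℝ) :
    ∑ f ∈ Finset.Nat.antidiagonalTuple (n+1) k, F f = 
    ∑ p ∈ Finset.HasAntidiagonal.antidiagonal k, ∑ g ∈ Finset.Nat.antidiagonalTuple n p.2, F (Fin.cons p.1 g) := by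
  rw [Finset.sum_sigma']
  symm
  refine Finset.sum_bij' (fun s _ => Fin.cons s.1.1 s.2) 
    (fun f _ => ⟨(f 0, ∑ i : Fin n, f i.succ), fun i => f i.succ⟩) ?_ ?_ ?_ ?_ ?_
  · rintro ⟨⟨i, l⟩, g⟩ h
    simp [Finset.Nat.mem_antidiagonalTuple, Fin.sum_univ_succ] at h ⊢
    omega
  · intro f h
    simp [Finset.Nat.mem_antidiagonalTuple, Fin.sum_univ_succ] at h ⊢
    omega
  · rintro ⟨⟨i, l⟩, g⟩ h
    simp [Finset.Nat.mem_antidiagonalTuple] at h ⊢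
    exact h.2
  · intro f h
    exact Fin.cons_self_tail f
  · intro s _
    rfl

lemma V_succ (r k a : ℕ) : V (r+1) k a =
    ∑' i : ℕ, ∑ p ∈ Finset.HasAntidiagonal.antidiagonal k, V r p.2 (a+i+1) / (((a+i:ℕ):ℝ)+1)^(p.1+1) := by
  have hs : ∀ (p : ℕ × ℕ) (g : Fin (r+1) → ℕ), Summable fun i : ℕ => 
    (-1 : ℝ) ^ (g (Fin.last r)) * (X (List.ofFn fun i : Fin r => g i.castSucc + 1) (g (Fin.last r)) (a+i+1)
      / (((a+i:ℕ):ℝ)+1)^(p.1+1)) := by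
    intro p g
    refine (X_summable _ _ _ ?_ (by omega) a).mul_left _
    intro k hk
    rw [List.mem_ofFn] at hk
    obtain ⟨i, rfl⟩ := hk
    omega
  rw [V, sum_tuple_succ]
  simp_rw [V, Finset.sum_div, mul_div_assoc]
  rw [Summable.tsum_finsetSum (fun p _ => summable_sum fun g _ => hs p g)]
  refine Finset.sum_congr rfl fun p _ => ?_
  rw [Summable.tsum_finsetSum (fun g _ => hs p g)]
  refine Finset.sum_congr rfl fun g _ => ?_
  rw [tsum_mul_left, ← Fin.succ_last, Fin.cons_succ, List.ofFn_succ]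
  simp [X]

lemma conv_bound (M : ℝ) (hM : 1 ≤ M) (k : ℕ) :
    ∑ p ∈ Finset.HasAntidiagonal.antidiagonal k, (2:ℝ)^p.2 / M^(p.1+1) ≤ 2^k / (M - 1/2) := by
  have hM' : 0 < M - 1/2 := by linarith
  induction k with
  | zero =>
    simp
    apply inv_anti₀ (by linarith) (by linarith)
  | succ k ih =>
    rw [Finset.Nat.sum_antidiagonal_succ]
    have e : ∀ p : ℕ × ℕ, (2:ℝ)^p.2 / M^(p.1+1+1) = (2:ℝ)^p.2 / M^(p.1+1) * (1/M) := by
      intro p; rw [pow_succ M (p.1+1)]; field_simp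
    simp_rw [e, ← Finset.sum_mul]
    calc _ ≤ (2:ℝ)^(k+1)/M^(0+1) + 2^k / (M-1/2) * (1/M) := by gcongr
      _ = _ := by 
        have : M ≠ 0 := by linarith
        have := hM'.ne'
        have h3 : M * 2 - 1 ≠ 0 := by intro h; apply this; linarith
        field_simp; ring

lemma V_conv_bound (r : ℕ) (C : ℝ) (hC : 0 ≤ C) (h : ∀ k a, |V r k a| ≤ 2^k * C * G a) (k m : ℕ) :
    |∑ p ∈ Finset.HasAntidiagonal.antidiagonal k, V r p.2 (m+1) / ((m:ℝ)+1)^(p.1+1)| ≤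
      2^k * (C * (G (m+1) / ((m:ℝ)+1/2))) := by
  have hG := G_pos (m+1)
  calc _ ≤ ∑ p ∈ Finset.HasAntidiagonal.antidiagonal k, |V r p.2 (m+1) / ((m:ℝ)+1)^(p.1+1)| := 
        Finset.abs_sum_le_sum_abs _ _
    _ ≤ ∑ p ∈ Finset.HasAntidiagonal.antidiagonal k, (C * G (m+1)) * (2^p.2 / ((m:ℝ)+1)^(p.1+1)) := by
      refine Finset.sum_le_sum fun p _ => ?_
      rw [abs_div, abs_of_pos (show 0 < ((m:ℝ)+1)^(p.1+1) by positivity), ← mul_div_assoc]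
      gcongr
      refine (h p.2 (m+1)).trans (le_of_eq (by ring))
    _ ≤ (C * G (m+1)) * (2^k / (((m:ℝ)+1) - 1/2)) := by
      rw [← Finset.mul_sum]
      gcongr
      exact conv_bound _ (by linarith [(Nat.cast_nonneg m : (0:ℝ) ≤ m)]) k
    _ = _ := by rw [show (m:ℝ)+1-1/2 = m+1/2 by ring]; ring

lemma V_bound (r : ℕ) : ∀ k a, |V r k a| ≤ 2^k * 2^r * G a := by
  induction r with
  | zero =>
    intro k a
    rw [V_zero, abs_mul, abs_pow, abs_neg, abs_one, one_pow, one_mul, abs_of_nonneg (I_nonneg k a), pow_zero, mul_one]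
    exact I_le k a
  | succ r ih =>
    intro k a
    rw [V_succ]
    have hb := fun i : ℕ => V_conv_bound r (2^r) (by positivity) ih k (a+i)
    have hs := ((G_summable a).mul_left (2^r)).mul_left (2^k)
    have := tsum_of_norm_bounded (f := fun i : ℕ => ∑ p ∈ Finset.HasAntidiagonal.antidiagonal k,
      V r p.2 (a + i + 1) / (((a + i : ℕ) : ℝ) + 1) ^ (p.1 + 1)) hs.hasSum hb
    rw [tsum_mul_left, tsum_mul_left] at this
    refine this.trans ?_
    calc _ ≤ (2:ℝ)^k * (2^r * (2 * G a)) := by gcongr; exact G_tsum a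
      _ = _ := by ring

noncomputable def D (x : ℝ) (r a : ℕ) : ℝ := ∑' n : ℕ, u x a n / ((n:ℝ)+1+x)^r

lemma u_le {x : ℝ} (hx0 : 0 < x) (hx : x < 1/2) (a n : ℕ) : u x a n ≤ 2 / ((n:ℝ)+1) := by
  unfold u
  have h1 := P_le hx0 hx n
  have hP := P_pos hx0 hx n
  have h2 := prod_le hx0 hx a
  have h0 : 0 < ∏ j ∈ Finset.range a, ((j:ℝ) + 1 - x) := 
    Finset.prod_pos fun j _ => by linarith [(Nat.cast_nonneg j : (0:ℝ) ≤ j)]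
  have h3 : ((a.factorial * (n+1).factorial : ℕ) : ℝ) ≤ ((a+n+1).factorial : ℕ) := by
    exact_mod_cast Nat.le_of_dvd (Nat.factorial_pos _) (Nat.factorial_mul_factorial_dvd_factorial_add a (n+1))
  push_cast at h3
  calc _ ≤ 2 * (n.factorial : ℝ) * a.factorial / (a.factorial * (n+1).factorial) := by gcongr
    _ = _ := by
      rw [Nat.factorial_succ n]
      push_cast
      have : (n.factorial : ℝ) ≠ 0 := by positivity
      have : (a.factorial : ℝ) ≠ 0 := by positivity
      field_simp

lemma D_summable {x : ℝ} (hx0 : 0 < x) (hx : x < 1/2) (r a : ℕ) : 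
    Summable fun n : ℕ => u x a n / ((n:ℝ)+1+x)^(r+1) := by
  have hs := (H_summable 0 0).mul_left 2
  simp only [H, zero_add] at hs
  refine Summable.of_nonneg_of_le (fun n => div_nonneg (u_pos hx0 hx a n).le (by positivity)) (fun n => ?_) hs
  have h1 := u_le hx0 hx a n
  have h2 : (n:ℝ)+1 ≤ ((n:ℝ)+1+x)^(r+1) := by
    calc (n:ℝ)+1 ≤ ((n:ℝ)+1+x)^1 := by linarith
      _ ≤ _ := pow_le_pow_right₀ (by linarith [(Nat.cast_nonneg n : (0:ℝ) ≤ n)]) (by omega)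
  calc _ ≤ (2 / ((n:ℝ)+1)) / ((n:ℝ)+1) := by gcongr
    _ = _ := by field_simp

lemma D_succ {x : ℝ} (hx0 : 0 < x) (hx : x < 1/2) (r a : ℕ) :
    HasSum (fun i : ℕ => D x r (a+i+1) / (((a+i:ℕ):ℝ) + 1 - x)) (D x (r+1) a) := by
  let q : ℕ × ℕ → ℝ := fun p => u x (a+p.2+1) p.1 / (((a+p.2:ℕ):ℝ) + 1 - x) / ((p.1:ℝ)+1+x)^r
  have hfib : ∀ n, HasSum (fun i => q (n,i)) (u x a n / ((n:ℝ)+1+x)^(r+1)) := by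
    intro n
    have := (transport hx0 hx a n).div_const (((n:ℝ)+1+x)^r)
    rw [div_div, ← pow_succ'] at this
    exact this
  have hq0 : 0 ≤ q := by
    intro p
    have : (0:ℝ) ≤ ((a+p.2:ℕ):ℝ) := by positivity
    exact div_nonneg (div_nonneg (u_pos hx0 hx _ _).le (by linarith)) (by positivity)
  have hq : Summable q := by
    rw [summable_prod_of_nonneg hq0]
    refine ⟨fun n => (hfib n).summable, ?_⟩
    simp_rw [fun n => (hfib n).tsum_eq]
    exact D_summable hx0 hx r a
  have e : ∑' p, q p = D x (r+1) a := (hq.hasSum.prod_fiberwise hfib).tsum_eq.symm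
  have h2 := hq.hasSum
  rw [e] at h2
  have h3 := (Equiv.prodComm ℕ ℕ).hasSum_iff.2 h2
  refine h3.prod_fiberwise fun i => ?_
  have h4 := h3.summable.prod_factor i
  have h5 : D x r (a+i+1) / (((a+i:ℕ):ℝ) + 1 - x) = ∑' n, (q ∘ (Equiv.prodComm ℕ ℕ)) (i, n) := by
    rw [D, ← tsum_div_const]
    refine tsum_congr fun n => ?_
    simp only [q, Function.comp, Equiv.prodComm_apply, Prod.swap]
    rw [div_right_comm]
  rw [h5]
  exact h4.hasSum

lemma V_hasSum_succ {x : ℝ} (hx0 : 0 < x) (hx : x < 1/2) (r a : ℕ)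
    (h : ∀ m, HasSum (fun k => x^k * V r k (m+1)) (D x r (m+1))) :
    HasSum (fun k => x^k * V (r+1) k a) (D x (r+1) a) := by
  let t : ℕ × ℕ → ℝ := fun q => x^q.2 * ∑ p ∈ Finset.HasAntidiagonal.antidiagonal q.2, 
    V r p.2 (a+q.1+1) / (((a+q.1:ℕ):ℝ)+1)^(p.1+1)
  have ht : Summable t := by
    have h1 : Summable fun k : ℕ => (2*x)^k := summable_geometric_of_lt_one (by positivity) (by linarith)
    have h2 := (G_summable a).mul_left (2^r)
    have h3 := h2.mul_of_nonneg h1 (fun i => mul_nonneg (by positivity) (G_term_nonneg a i)) (fun k => by positivity)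
    refine Summable.of_norm_bounded h3 fun q => ?_
    have hb := V_conv_bound r (2^r) (by positivity) (V_bound r) q.2 (a+q.1)
    rw [Real.norm_eq_abs, abs_mul, abs_of_pos (show 0 < x^q.2 by positivity)]
    refine (mul_le_mul_of_nonneg_left hb (by positivity)).trans (le_of_eq ?_)
    rw [mul_pow]; ring
  have hfib : ∀ i, HasSum (fun k => t (i,k)) (D x r (a+i+1) / (((a+i:ℕ):ℝ) + 1 - x)) := by
    intro i
    have hM : (0:ℝ) ≤ ((a+i:ℕ):ℝ) := by positivity
    set M : ℝ := ((a+i:ℕ):ℝ) + 1 with hMdef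
    have hM1 : 1 ≤ M := by linarith
    have hg : HasSum (fun k : ℕ => x^k / M^(k+1)) (1/(M-x)) := by
      have := (hasSum_geometric_of_lt_one (r := x/M) (by positivity) (by rw [div_lt_one (by linarith)]; linarith)).mul_left (1/M)
      have hM0 : M ≠ 0 := by linarith
      have e1 : (fun k : ℕ => x^k / M^(k+1)) = fun k => 1 / M * (x / M)^k := by
        funext k; rw [div_pow, pow_succ]; field_simp
      have e2 : 1/(M-x) = 1 / M * (1 - x/M)⁻¹ := by
        have : M - x ≠ 0 := by linarith
        field_simp
      rw [e1, e2]
      exact this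
    have hv := h (a+i)
    have hsv : Summable fun k => ‖x^k * V r k (a+i+1)‖ := hv.summable.norm
    have hsg : Summable fun k : ℕ => ‖x^k / M^(k+1)‖ := hg.summable.norm
    have hc := tsum_mul_tsum_eq_tsum_sum_antidiagonal_of_summable_norm hsg hsv
    rw [hg.tsum_eq, hv.tsum_eq] at hc
    have he : ∀ k, ∑ p ∈ Finset.HasAntidiagonal.antidiagonal k, x^p.1 / M^(p.1+1) * (x^p.2 * V r p.2 (a+i+1)) = t (i,k) := by
      intro k
      simp only [t]
      rw [Finset.mul_sum]
      refine Finset.sum_congr rfl fun p hp => ?_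
      rw [Finset.HasAntidiagonal.mem_antidiagonal] at hp
      rw [← hp, pow_add]
      ring
    simp_rw [he] at hc
    rw [div_eq_mul_one_div, mul_comm, hc]
    exact (ht.prod_factor i).hasSum
  have e : ∑' p, t p = D x (r+1) a := by
    rw [← (ht.hasSum.prod_fiberwise hfib).tsum_eq]
    exact (D_succ hx0 hx r a).tsum_eq
  have h2 := ht.hasSum
  rw [e] at h2
  have h3 := (Equiv.prodComm ℕ ℕ).hasSum_iff.2 h2
  refine h3.prod_fiberwise fun k => ?_
  have h4 := (h3.summable.prod_factor k).hasSum
  rw [V_succ, ← tsum_mul_left]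
  exact h4

lemma V_hasSum_zero {x : ℝ} (hx0 : 0 < x) (hx : x < 1/2) (m : ℕ) : 
    HasSum (fun k => x^k * V 0 k (m+1)) (D x 0 (m+1)) := by
  have hs : ∀ m, Summable fun k => (-x)^k * I k m := by
    intro m
    have h1 : Summable fun k : ℕ => (2*x)^k := summable_geometric_of_lt_one (by positivity) (by linarith)
    refine Summable.of_norm_bounded (h1.mul_right (G m)) fun k => ?_
    rw [norm_mul, norm_pow, norm_neg, Real.norm_eq_abs, Real.norm_eq_abs, abs_of_pos hx0, abs_of_nonneg (I_nonneg k m)]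
    calc _ ≤ x^k * (2^k * G m) := by gcongr; exact I_le k m
      _ = _ := by rw [mul_pow]; ring
  have key : ∑' k, (-x)^k * I k (m+1) = D x 0 (m+1) := by
    simp only [D, pow_zero, div_one]
    induction m with
    | zero =>
      have e : ∀ k, I k 1 = 1 := by
        intro k; induction k with
        | zero => simp [I]
        | succ k ih => rw [show (1:ℕ) = 0+1 from rfl] at *; rw [I, ih]; simp
      simp only [zero_add, e, mul_one]
      rw [(gauss_one hx0 hx).tsum_eq, tsum_geometric_of_norm_lt_one]
      · simp
      · rw [norm_neg, Real.norm_eq_abs, abs_of_pos hx0]; linarith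
    | succ m ih =>
      have hg := gauss_succ hx0 hx m
      rw [← ih] at hg
      have hr : ((m:ℝ)+2) * ∑' k, (-x)^k * I k (m+1+1) = 
          ((m:ℝ)+1) * (∑' k, (-x)^k * I k (m+1)) - x * ∑' k, (-x)^k * I k (m+1+1) := by
        rw [(hs (m+1)).tsum_eq_zero_add]
        nth_rewrite 1 [(hs (m+1+1)).tsum_eq_zero_add]
        have e : ∀ k, (-x)^(k+1) * I (k+1) (m+1+1) = (((m:ℝ)+1)/((m:ℝ)+2)) * ((-x)^(k+1) * I (k+1) (m+1)) 
            - (x / ((m:ℝ)+2)) * ((-x)^k * I k (m+1+1)) := by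
          intro k
          rw [I]
          push_cast
          rw [show (m:ℝ) + 1 + 1 = m+2 by ring]
          field_simp
          ring
        simp_rw [e]
        rw [Summable.tsum_sub, tsum_mul_left, tsum_mul_left]
        · rw [show I 0 (m+1+1) = 1/((m:ℝ)+2) by rw [I]; push_cast; ring, show I 0 (m+1) = 1/((m:ℝ)+1) by rw [I]]
          field_simp
          ring
        · exact ((summable_nat_add_iff 1).2 (hs (m+1))).mul_left _
        · exact (hs (m+1+1)).mul_left _
      have : (m:ℝ)+2+x ≠ 0 := by positivity
      apply mul_right_cancel₀ this
      rw [show m + 1 + 1 = m+2 from rfl] at *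
      linarith
  rw [← key]
  have := (hs (m+1)).hasSum
  convert this using 2 with k
  rw [V_zero, neg_pow]
  ring

lemma V_hasSum {x : ℝ} (hx0 : 0 < x) (hx : x < 1/2) (r m : ℕ) : 
    HasSum (fun k => x^k * V r k (m+1)) (D x r (m+1)) := by
  induction r generalizing m with
  | zero => exact V_hasSum_zero hx0 hx m
  | succ r ih => exact V_hasSum_succ hx0 hx r (m+1) ih

lemma V_hasSum' {x : ℝ} (hx0 : 0 < x) (hx : x < 1/2) (r : ℕ) :
    HasSum (fun k => x^k * V (r+1) k 0) (D x (r+1) 0) := 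
  V_hasSum_succ hx0 hx r 0 (V_hasSum hx0 hx r)

noncomputable def Z (s b : ℕ) : ℝ := ∑' n : ℕ, H b n / ((n:ℝ)+1)^s

noncomputable def RR (r k : ℕ) : ℝ :=
  ∑ p ∈ (Finset.range (k + 1) ×ˢ Finset.range (k + 1)).filter (fun p => p.1 + 2 * p.2 = k),
    (-1 : ℝ) ^ p.1 * (Nat.choose (p.1 + r) r : ℝ) * Z (p.1 + r + 2) p.2

lemma a_hasSum {x : ℝ} (hx0 : 0 < x) (hx : x < 1/2) (r n : ℕ) :
    HasSum (fun a : ℕ => (-x)^a * (Nat.choose (a+r) r : ℝ) / ((n:ℝ)+1)^(a+r+2))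
      (1 / ((n:ℝ)+1) / ((n:ℝ)+1+x)^(r+1)) := by
  have hn : (0:ℝ) < (n:ℝ)+1 := by positivity
  have h := (hasSum_choose_mul_geometric_of_norm_lt_one r (r := -x / ((n:ℝ)+1)) (by
    rw [norm_div, norm_neg, Real.norm_eq_abs, Real.norm_eq_abs, abs_of_pos hx0, abs_of_pos hn, div_lt_one hn]
    linarith [(Nat.cast_nonneg n : (0:ℝ) ≤ n)])).mul_left (1/((n:ℝ)+1)^(r+2))
  have e1 : (1 / ((n:ℝ)+1) / ((n:ℝ)+1+x)^(r+1)) = 1/((n:ℝ)+1)^(r+2) * (1 / (1 - -x / ((n:ℝ)+1))^(r+1)) := by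
    rw [show 1 - -x/((n:ℝ)+1) = (n+1+x)/((n:ℝ)+1) by field_simp; ring, div_pow]
    have : (n:ℝ)+1+x ≠ 0 := by positivity
    field_simp
    ring
  rw [e1]
  have e2 : (fun a : ℕ => (-x)^a * (Nat.choose (a+r) r : ℝ) / ((n:ℝ)+1)^(a+r+2)) =
     fun a : ℕ => 1/((n:ℝ)+1)^(r+2) * (((a+r).choose r : ℝ) * (-x/((n:ℝ)+1))^a) := by
    funext a
    rw [div_pow, show a+r+2 = a+(r+2) by ring, pow_add]
    field_simp
  rw [e2]
  exact h

lemma RR_hasSum {x : ℝ} (hx0 : 0 < x) (hx : x < 1/2) (r : ℕ) :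
    HasSum (fun k => x^k * RR r k) (D x (r+1) 0) := by
  let t : ℕ × (ℕ × ℕ) → ℝ := fun q =>
    ((-x)^q.2.1 * (Nat.choose (q.2.1+r) r : ℝ) / ((q.1:ℝ)+1)^(q.2.1+r+2)) * (x^(2*q.2.2) * H q.2.2 q.1)
  have ht : Summable t := by
    have h1 := (geo hx0 hx).summable
    have h2 : Summable fun a : ℕ => ((a+r).choose r : ℝ) * x^a := 
      (hasSum_choose_mul_geometric_of_norm_lt_one r (r := x) 
        (by rw [Real.norm_eq_abs, abs_of_pos hx0]; linarith)).summable
    have h3 := H_summable 0 0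
    simp only [H, zero_add] at h3
    have h4 := h2.mul_of_nonneg h1 (fun a => by positivity) (fun b => by positivity)
    have h5 := h3.mul_of_nonneg h4 (fun n => by positivity) (fun p => by positivity)
    refine Summable.of_norm_bounded h5 fun ⟨n, a, b⟩ => ?_
    simp only [t]
    rw [norm_mul, norm_div, norm_mul, norm_pow, norm_neg, Real.norm_eq_abs, Real.norm_eq_abs, Real.norm_eq_abs, 
      Real.norm_eq_abs, abs_of_pos hx0, abs_of_nonneg (mul_nonneg (by positivity) (H_nonneg b n)),
      abs_of_nonneg (show (0:ℝ) ≤ ((a+r).choose r : ℝ) by positivity), 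
      abs_of_pos (show (0:ℝ) < ((n:ℝ)+1)^(a+r+2) by positivity)]
    have hH := PH_le (x := x) b n
    have hH0 := mul_nonneg (show 0 ≤ x^(2*b) by positivity) (H_nonneg b n)
    have hp : ((n:ℝ)+1)^2 ≤ ((n:ℝ)+1)^(a+r+2) := 
      pow_le_pow_right₀ (by linarith [(Nat.cast_nonneg n : (0:ℝ) ≤ n)]) (by omega)
    calc _ ≤ x^a * ((a+r).choose r : ℝ) / ((n:ℝ)+1)^2 * (2*x^2)^b := by gcongr
      _ = _ := by ring
  have hfib : ∀ n, HasSum (fun p => t (n,p)) (u x 0 n / ((n:ℝ)+1+x)^(r+1)) := by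
    intro n
    have h1 := a_hasSum hx0 hx r n
    have h2 := (P_summable hx0 hx n).hasSum
    have h3 := h1.mul h2 (ht.prod_factor n)
    have e : u x 0 n / ((n:ℝ)+1+x)^(r+1) = 1 / ((n:ℝ)+1) / ((n:ℝ)+1+x)^(r+1) * ∑' b, x^(2*b) * H b n := by
      unfold u P
      rw [zero_add, Nat.factorial_succ]
      have : (n.factorial : ℝ) ≠ 0 := by positivity
      have : (n:ℝ)+1+x ≠ 0 := by positivity
      push_cast
      simp
      field_simp
    rw [e]
    exact h3
  have e : ∑' p, t p = D x (r+1) 0 := (ht.hasSum.prod_fiberwise hfib).tsum_eq.symm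
  have h2 := ht.hasSum
  rw [e] at h2
  have h3 := (Equiv.prodComm (ℕ × ℕ) ℕ).hasSum_iff.2 h2
  have h4 : HasSum (fun p : ℕ × ℕ => x^(p.1+2*p.2) * ((-1 : ℝ) ^ p.1 * (Nat.choose (p.1 + r) r : ℝ) * Z (p.1 + r + 2) p.2)) (D x (r+1) 0) := by
    refine h3.prod_fiberwise fun p => ?_
    have h5 := (h3.summable.prod_factor p).hasSum
    convert! h5 using 1
    rw [Z, ← tsum_mul_left, ← tsum_mul_left]
    refine tsum_congr fun n => ?_
    simp only [t, Function.comp, Equiv.prodComm_apply, Prod.swap]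
    rw [neg_pow x, pow_add]
    ring
  have h6 := h4.tsum_fiberwise (fun p : ℕ × ℕ => p.1 + 2 * p.2)
  convert! h6 using 1
  funext k
  have hset : (fun p : ℕ × ℕ => p.1 + 2 * p.2) ⁻¹' {k} = 
     (((Finset.range (k + 1) ×ˢ Finset.range (k + 1)).filter (fun p => p.1 + 2 * p.2 = k) : Finset (ℕ × ℕ)) : Set (ℕ × ℕ)) := by
    ext p
    simp
    omega
  rw [hset, Finset.tsum_subtype' _ (fun p : ℕ × ℕ => x^(p.1+2*p.2) * ((-1 : ℝ) ^ p.1 * (Nat.choose (p.1 + r) r : ℝ) * Z (p.1 + r + 2) p.2)), RR, Finset.mul_sum]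
  refine Finset.sum_congr rfl fun p hp => ?_
  rw [(Finset.mem_filter.1 hp).2]

lemma ps_unique (c : ℕ → ℝ) (h : ∀ x : ℝ, 0 < x → x < 1/2 → HasSum (fun k => x^k * c k) 0) : ∀ N, c N = 0 := by
  intro N
  induction N using Nat.strong_induction_on with
  | _ N ih =>
  have h1 : ∀ x : ℝ, 0 < x → x < 1/2 → HasSum (fun k => x^k * c (k+N)) 0 := by
    intro x hx0 hx
    have := (hasSum_nat_add_iff' N).2 (h x hx0 hx)
    rw [Finset.sum_eq_zero (fun i hi => by rw [ih i (Finset.mem_range.1 hi), mul_zero]), sub_zero] at this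
    have h2 := this.mul_left (x^N)⁻¹
    rw [mul_zero] at h2
    convert! h2 using 2 with k
    rw [pow_add]
    field_simp
  have hb := (h1 (1/4) (by norm_num) (by norm_num)).summable.norm
  have hlim : Tendsto (fun x : ℝ => ∑' k, x^k * c (k+N)) (𝓝[>] 0) (𝓝 (∑' k, (0:ℝ)^k * c (k+N))) := by
    refine tendsto_tsum_of_dominated_convergence hb ?_ ?_
    · intro k
      have : Continuous fun x : ℝ => x^k * c (k+N) := by fun_prop
      exact (this.tendsto 0).mono_left nhdsWithin_le_nhds
    · have : Set.Ioo (0:ℝ) (1/4) ∈ 𝓝[>] (0:ℝ) := Ioo_mem_nhdsGT (by norm_num)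
      filter_upwards [this] with x hx k
      rw [norm_mul, norm_mul, norm_pow, norm_pow, Real.norm_eq_abs, Real.norm_eq_abs, Real.norm_eq_abs, abs_of_pos hx.1, abs_of_pos (by norm_num : (0:ℝ) < 1/4)]
      have := hx.2
      have := hx.1
      gcongr
  have hz : Tendsto (fun x : ℝ => ∑' k, x^k * c (k+N)) (𝓝[>] 0) (𝓝 0) := by
    refine tendsto_const_nhds.congr' ?_
    have : Set.Ioo (0:ℝ) (1/4) ∈ 𝓝[>] (0:ℝ) := Ioo_mem_nhdsGT (by norm_num)
    filter_upwards [this] with x hx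
    rw [(h1 x hx.1 (by linarith [hx.2])).tsum_eq]
  have := tendsto_nhds_unique hlim hz
  rw [tsum_eq_single 0 (fun k hk => by simp [hk])] at this
  simpa using this

lemma main_eq (r k : ℕ) : V (r+1) k 0 = RR r k := by
  have := ps_unique (fun k => V (r+1) k 0 - RR r k) (fun x hx0 hx => by
    have := (V_hasSum' hx0 hx r).sub (RR_hasSum hx0 hx r)
    rw [sub_self] at this
    convert! this using 2 with k
    ring) k
  linarith

def Q (d : ℕ) {r : ℕ} (n : ℕ) (f : Fin r → ℕ+) : Prop :=
  (∀ i j, i < j → (f i : ℕ) + d ≤ f j) ∧ ∀ i, n < (f i : ℕ)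

lemma Q_cons (d r n i : ℕ) (g : Fin r → ℕ+) : 
    Q d n (Fin.cons (n+i).succPNat g : Fin (r+1) → ℕ+) ↔ Q d (n+i+d) g := by
  unfold Q
  constructor
  · rintro ⟨h1, h2⟩
    refine ⟨fun a b hab => ?_, fun a => ?_⟩
    · have := h1 a.succ b.succ (Fin.succ_lt_succ_iff.2 hab)
      simpa using this
    · have := h1 0 a.succ (Fin.succ_pos a)
      simp at this
      omega
  · rintro ⟨h1, h2⟩
    refine ⟨fun a b hab => ?_, fun a => ?_⟩
    · cases a using Fin.cases with
      | zero =>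
        cases b using Fin.cases with
        | zero => exact absurd hab (lt_irrefl _)
        | succ b => have := h2 b; simp; omega
      | succ a =>
        cases b using Fin.cases with
        | zero => exact absurd hab (Fin.not_lt_zero _)
        | succ b => have := h1 a b (Fin.succ_lt_succ_iff.1 hab); simpa using this
    · cases a using Fin.cases with
      | zero => simp
      | succ a => have := h2 a; simp; omega

lemma tuple_rec (d r n : ℕ) (F : (Fin (r+1) → ℕ+) → ENNReal) :
    ∑' f : {f : Fin (r+1) → ℕ+ // Q d n f}, F f.1 =
    ∑' i : ℕ, ∑' g : {g : Fin r → ℕ+ // Q d (n+i+d) g}, F (Fin.cons (n+i).succPNat g.1) := by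
  let T : (Σ i : ℕ, {g : Fin r → ℕ+ // Q d (n+i+d) g}) → {f : Fin (r+1) → ℕ+ // Q d n f} :=
    fun s => ⟨Fin.cons (n+s.1).succPNat s.2.1, (Q_cons d r n s.1 s.2.1).2 s.2.2⟩
  have hT : Function.Bijective T := by
    constructor
    · rintro ⟨i, g, hg⟩ ⟨i', g', hg'⟩ h
      simp only [T, Subtype.mk.injEq] at h
      have h' := Fin.cons_inj.1 h
      have h1 : n + i + 1 = n + i' + 1 := congrArg PNat.val h'.1
      have h2 : i = i' := by omega
      subst h2
      have h3 := h'.2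
      subst h3
      rfl
    · rintro ⟨f, hf⟩
      have h0 := hf.2 0
      have e : f = Fin.cons (n+((f 0 : ℕ) - n - 1)).succPNat (Fin.tail f) := by
        conv_lhs => rw [← Fin.cons_self_tail f]
        congr 1
        apply PNat.eq
        simp
        omega
      refine ⟨⟨(f 0 : ℕ) - n - 1, ⟨Fin.tail f, ?_⟩⟩, ?_⟩
      · rw [← Q_cons, ← e]; exact hf
      · apply Subtype.ext
        exact e.symm
  rw [← (Equiv.ofBijective T hT).tsum_eq, ENNReal.tsum_sigma']
  rfl

noncomputable def ZSE : List ℕ → ℕ → ENNReal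
  | [], _ => 1
  | k :: l, n => ∑' i : ℕ, ENNReal.ofReal (1 / (((n+i:ℕ):ℝ)+1)^k) * ZSE l (n+i)

lemma ZSE_eq : ∀ (l : List ℕ) (n : ℕ),
    ∑' f : {f : Fin l.length → ℕ+ // Q 0 n f}, ∏ i, ENNReal.ofReal (1 / (((f.1 i : ℕ+) : ℕ) : ℝ)^(l.get i)) = ZSE l n
  | [], n => by
    have : Unique {f : Fin ([] : List ℕ).length → ℕ+ // Q 0 n f} := 
      { default := ⟨fun i => 1, ⟨fun i => i.elim0, fun i => i.elim0⟩⟩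
        uniq := fun f => Subtype.ext (funext fun i => i.elim0) }
    rw [tsum_fintype]
    simp [ZSE]
  | k :: l, n => by
    have h := tuple_rec 0 l.length n (fun f => ∏ i, ENNReal.ofReal (1 / (((f i : ℕ+) : ℕ) : ℝ)^((k::l).get i)))
    refine h.trans ?_
    rw [ZSE]
    refine tsum_congr fun i => ?_
    rw [← ZSE_eq l (n+i), ← ENNReal.tsum_mul_left]
    refine tsum_congr fun g => ?_
    refine (Fin.prod_univ_succ _).trans ?_
    simp only [Fin.cons_zero, Fin.cons_succ, Nat.succPNat_coe, Nat.succ_eq_add_one, Nat.cast_add, Nat.cast_one]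
    rfl

lemma ZSE_rep (b n : ℕ) : ZSE (List.replicate b 2) n = ENNReal.ofReal (H b n) := by
  induction b generalizing n with
  | zero => simp [ZSE, H]
  | succ b ih =>
    rw [List.replicate_succ, ZSE, H, ENNReal.ofReal_tsum_of_nonneg _ (H_summable b n)]
    · refine tsum_congr fun i => ?_
      rw [ih, ← ENNReal.ofReal_mul (by positivity)]
      congr 1; ring
    · intro i; exact div_nonneg (H_nonneg _ _) (by positivity)

lemma zetaStar_eq (s b : ℕ) : zetaStarL ([s] ++ List.replicate b 2) = Z s b := by
  have h := ZSE_eq (s :: List.replicate b 2) 0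
  rw [ZSE] at h
  simp_rw [ZSE_rep] at h
  have h2 := congrArg ENNReal.toReal h
  rw [ENNReal.tsum_toReal_eq, ENNReal.tsum_toReal_eq] at h2
  rotate_left
  · intro i; exact ENNReal.mul_ne_top ENNReal.ofReal_ne_top ENNReal.ofReal_ne_top
  · intro f; exact ENNReal.prod_ne_top fun i _ => ENNReal.ofReal_ne_top
  have e : Z s b = ∑' i : ℕ, (ENNReal.ofReal (1 / (((0+i:ℕ):ℝ)+1)^s) * ENNReal.ofReal (H b (0+i))).toReal := by
    rw [Z]
    refine tsum_congr fun i => ?_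
    rw [ENNReal.toReal_mul, ENNReal.toReal_ofReal (by positivity), ENNReal.toReal_ofReal (H_nonneg _ _)]
    simp only [zero_add]
    ring
  rw [e, ← h2, zetaStarL]
  have hQ : ∀ f : Fin (s :: List.replicate b 2).length → ℕ+, Monotone f ↔ Q 0 0 f := by
    intro f
    constructor
    · intro hf
      exact ⟨fun i j hij => by simpa using hf hij.le, fun i => (f i).pos⟩
    · rintro ⟨h1, -⟩ i j hij
      rcases hij.eq_or_lt with rfl | hlt
      · exact le_rfl
      · simpa using h1 i j hlt
  refine Eq.trans ?_ ((Equiv.subtypeEquivRight hQ).tsum_eq _)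
  refine tsum_congr fun f => ?_
  rw [ENNReal.toReal_prod]
  refine Finset.prod_congr rfl fun i _ => ?_
  rw [ENNReal.toReal_ofReal (by positivity)]
  rfl

noncomputable def XE (φ : ℕ → ENNReal) : List ℕ → ℕ → ENNReal
  | [], a => φ a
  | k :: l, a => ∑' i : ℕ, ENNReal.ofReal (1 / (((a+i:ℕ):ℝ)+1)^k) * XE φ l (a+i+1)

def lastOr {r : ℕ} (a : ℕ) (f : Fin r → ℕ+) : ℕ := if h : 0 < r then (f ⟨r-1, Nat.sub_lt h Nat.one_pos⟩ : ℕ) else a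

lemma lastOr_cons {r : ℕ} (a : ℕ) (m : ℕ+) (g : Fin r → ℕ+) : 
    lastOr a (Fin.cons m g : Fin (r+1) → ℕ+) = lastOr (m:ℕ) g := by
  unfold lastOr
  rcases r with _ | r
  · simp
  · simp
    have : (⟨r+1, by omega⟩ : Fin (r+1+1)) = Fin.succ ⟨r, by omega⟩ := rfl
    rw [this, Fin.cons_succ]

lemma XE_eq (φ : ℕ → ENNReal) : ∀ (l : List ℕ) (a : ℕ),
    ∑' f : {f : Fin l.length → ℕ+ // Q 1 a f}, (∏ i, ENNReal.ofReal (1 / (((f.1 i : ℕ+) : ℕ) : ℝ)^(l.get i))) * φ (lastOr a f.1) = XE φ l a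
  | [], n => by
    have : Unique {f : Fin ([] : List ℕ).length → ℕ+ // Q 1 n f} := 
      { default := ⟨fun i => 1, ⟨fun i => i.elim0, fun i => i.elim0⟩⟩
        uniq := fun f => Subtype.ext (funext fun i => i.elim0) }
    rw [tsum_fintype]
    simp [XE, lastOr]
  | k :: l, n => by
    have h := tuple_rec 1 l.length n (fun f => (∏ i, ENNReal.ofReal (1 / (((f i : ℕ+) : ℕ) : ℝ)^((k::l).get i))) * φ (lastOr n f))
    refine h.trans ?_
    rw [XE]
    refine tsum_congr fun i => ?_
    rw [← XE_eq φ l (n+i+1), ← ENNReal.tsum_mul_left]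
    refine tsum_congr fun g => ?_
    rw [lastOr_cons, ← mul_assoc, Nat.succPNat_coe]
    congr 1
    refine (Fin.prod_univ_succ _).trans ?_
    simp only [Fin.cons_zero, Fin.cons_succ, Nat.succPNat_coe, Nat.succ_eq_add_one, Nat.cast_add, Nat.cast_one]
    rfl

lemma XE_X (j : ℕ) : ∀ (l : List ℕ) (_ : ∀ k ∈ l, 1 ≤ k) (a : ℕ), 
    XE (fun m => ENNReal.ofReal (I j m)) l a = ENNReal.ofReal (X l j a)
  | [], _, a => rfl
  | k :: l, h, a => by
    have hl : ∀ k ∈ l, 1 ≤ k := fun k hk => h k (List.mem_cons_of_mem _ hk)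
    obtain ⟨C, hC, hF⟩ := X_bound j l hl
    rw [XE, X, ENNReal.ofReal_tsum_of_nonneg _ (X_summable j k l hl (h k (by simp)) a)]
    · refine tsum_congr fun i => ?_
      rw [XE_X j l hl, ← ENNReal.ofReal_mul (by positivity)]
      congr 1; ring
    · intro i; exact div_nonneg (hF _).1 (by positivity)

lemma X_hasSum (j : ℕ) (l : List ℕ) (h : ∀ k ∈ l, 1 ≤ k) :
    HasSum (fun f : {f : Fin l.length → ℕ+ // StrictMono f} => 
      (∏ i, (1 / (((f.1 i : ℕ+) : ℕ) : ℝ)^(l.get i))) * I j (lastOr 0 f.1)) (X l j 0) := by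
  have hQ : ∀ f : Fin l.length → ℕ+, StrictMono f ↔ Q 1 0 f := by
    intro f
    constructor
    · intro hf
      exact ⟨fun i j hij => hf hij, fun i => (f i).pos⟩
    · rintro ⟨h1, -⟩ i j hij
      exact h1 i j hij
  rw [← (Equiv.subtypeEquivRight hQ).symm.hasSum_iff]
  have h1 := XE_eq (fun m => ENNReal.ofReal (I j m)) l 0
  rw [XE_X j l h] at h1
  obtain ⟨C, hC, hF⟩ := X_bound j l h
  have hne : ∑' f : {f : Fin l.length → ℕ+ // Q 1 0 f}, (∏ i, ENNReal.ofReal (1 / (((f.1 i : ℕ+) : ℕ) : ℝ)^(l.get i))) * ENNReal.ofReal (I j (lastOr 0 f.1)) ≠ ⊤ := by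
    rw [h1]; exact ENNReal.ofReal_ne_top
  have h2 := ENNReal.hasSum_toReal hne
  have h3 := congrArg ENNReal.toReal h1
  rw [ENNReal.tsum_toReal_eq (fun f => ENNReal.mul_ne_top (ENNReal.prod_ne_top fun i _ => ENNReal.ofReal_ne_top) ENNReal.ofReal_ne_top), ENNReal.toReal_ofReal (hF 0).1] at h3
  rw [h3] at h2
  convert! h2 using 1
  funext f
  rw [ENNReal.toReal_mul, ENNReal.toReal_prod, ENNReal.toReal_ofReal (I_nonneg _ _)]
  simp_rw [fun i => ENNReal.toReal_ofReal (show 0 ≤ 1 / (((f.1 i : ℕ+) : ℕ) : ℝ)^(l.get i) by positivity)]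
  rfl

noncomputable def K (j m : ℕ) (t : ℝ) : ℝ := t^j * Real.exp (-t) * (1 - Real.exp (-t))^m

lemma om_nonneg {t : ℝ} (ht : 0 < t) : 0 ≤ 1 - Real.exp (-t) := by
  have : Real.exp (-t) ≤ 1 := Real.exp_le_one_iff.2 (by linarith)
  linarith

lemma K_nonneg (j m : ℕ) {t : ℝ} (ht : 0 < t) : 0 ≤ K j m t := by
  have := om_nonneg ht
  unfold K; positivity

lemma K_le (j m : ℕ) {t : ℝ} (ht : 0 < t) : K j m t ≤ t^j * Real.exp (-t) := by
  have := om_nonneg ht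
  have h2 := Real.exp_pos (-t)
  unfold K
  have h3 : (1 - Real.exp (-t))^m ≤ 1 := pow_le_one₀ this (by linarith)
  have h4 : 0 ≤ t^j * Real.exp (-t) := by positivity
  exact mul_le_of_le_one_right h4 h3

lemma K_cont (j m : ℕ) : Continuous (K j m) := by
  unfold K; fun_prop

lemma K_int (j m : ℕ) : IntegrableOn (K j m) (Set.Ioi 0) := by
  have h := Real.GammaIntegral_convergent (s := (j:ℝ)+1) (by positivity)
  refine Integrable.mono' h (K_cont j m).aestronglyMeasurable ?_
  refine (ae_restrict_iff' measurableSet_Ioi).2 (Eventually.of_forall fun t ht => ?_)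
  rw [Real.norm_of_nonneg (K_nonneg j m ht)]
  refine (K_le j m ht).trans (le_of_eq ?_)
  rw [add_sub_cancel_right, Real.rpow_natCast]; ring

lemma K_tendsto (j m : ℕ) : Tendsto (K j m) atTop (𝓝 0) := by
  refine squeeze_zero' ?_ ?_ (Real.tendsto_pow_mul_exp_neg_atTop_nhds_zero j)
  · filter_upwards [eventually_gt_atTop 0] with t ht using K_nonneg j m ht
  · filter_upwards [eventually_gt_atTop 0] with t ht using K_le j m ht

lemma exp_deriv (t : ℝ) : HasDerivAt (fun t : ℝ => Real.exp (-t)) (-Real.exp (-t)) t := by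
  simpa using (hasDerivAt_id t).neg.exp

lemma om_deriv (t : ℝ) : HasDerivAt (fun t : ℝ => 1 - Real.exp (-t)) (Real.exp (-t)) t := by
  simpa using (exp_deriv t).const_sub 1

lemma K_zero (m : ℕ) : ∫ t in Set.Ioi 0, K 0 m t = 1/((m:ℝ)+1) := by
  have hd : ∀ t ∈ Set.Ici (0:ℝ), HasDerivAt (fun t : ℝ => (1 - Real.exp (-t))^(m+1) / ((m:ℝ)+1)) (K 0 m t) t := by
    intro t _
    have := ((om_deriv t).pow (m+1)).div_const ((m:ℝ)+1)
    convert! this using 1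
    have : (m:ℝ)+1 ≠ 0 := by positivity
    unfold K
    push_cast
    field_simp
  have ht : Tendsto (fun t : ℝ => (1 - Real.exp (-t))^(m+1) / ((m:ℝ)+1)) atTop (𝓝 ((1-0)^(m+1)/((m:ℝ)+1))) := by
    exact ((Real.tendsto_exp_neg_atTop_nhds_zero.const_sub 1).pow _).div_const _
  rw [integral_Ioi_of_hasDerivAt_of_tendsto' hd (K_int 0 m) ht]
  simp

lemma K_step (j m : ℕ) : (m:ℝ) * (∫ t in Set.Ioi 0, K (j+1) (m-1) t) + ((j:ℝ)+1) * (∫ t in Set.Ioi 0, K j m t)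
    = ((m:ℝ)+1) * ∫ t in Set.Ioi 0, K (j+1) m t := by
  have hd : ∀ t ∈ Set.Ici (0:ℝ), HasDerivAt (K (j+1) m) 
      ((m:ℝ) * K (j+1) (m-1) t + ((j:ℝ)+1) * K j m t - ((m:ℝ)+1) * K (j+1) m t) t := by
    intro t _
    have := ((hasDerivAt_pow (j+1) t).mul (exp_deriv t)).mul ((om_deriv t).pow m)
    convert! this using 1
    unfold K
    rcases m with _ | m
    · push_cast; simp; ring
    · simp only [Pi.mul_apply, Pi.pow_apply, Nat.add_sub_cancel]
      push_cast
      ring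
  have i1 := (K_int (j+1) (m-1)).const_mul (m:ℝ)
  have i2 := (K_int j m).const_mul ((j:ℝ)+1)
  have i12 : IntegrableOn (fun t => (m:ℝ) * K (j+1) (m-1) t + ((j:ℝ)+1) * K j m t) (Set.Ioi 0) := i1.add i2
  have i3 := (K_int (j+1) m).const_mul ((m:ℝ)+1)
  have h := integral_Ioi_of_hasDerivAt_of_tendsto' hd (i12.sub i3) (K_tendsto _ _)
  rw [integral_sub i12 i3, integral_add i1 i2, integral_const_mul, integral_const_mul, integral_const_mul] at h
  have h0 : K (j+1) m 0 = 0 := by simp [K]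
  rw [h0] at h
  linarith

lemma K_I : ∀ j m : ℕ, ∫ t in Set.Ioi 0, K j m t = (j.factorial : ℝ) * I j (m+1)
  | 0, m => by rw [K_zero, I]; simp
  | j+1, 0 => by
    have h := K_step j 0
    rw [K_I j 0] at h
    rw [I]
    rw [Nat.factorial_succ]; push_cast
    simp at h ⊢
    linarith
  | j+1, m+1 => by
    have h := K_step j (m+1)
    rw [K_I j (m+1), Nat.add_sub_cancel, K_I (j+1) m] at h
    rw [I]
    rw [Nat.factorial_succ] at h ⊢; push_cast at h ⊢
    have : (m:ℝ)+1+1 ≠ 0 := by positivity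
    field_simp
    linarith

lemma xi_X (l : List ℕ) (hl0 : l ≠ []) (hl : ∀ k ∈ l, 1 ≤ k) (j : ℕ) :
    xiL l ((j:ℝ)+1) = X l j 0 := by
  have hlen : 0 < l.length := List.length_pos_iff.2 hl0
  have hS := X_hasSum j l hl
  let c : {f : Fin l.length → ℕ+ // StrictMono f} → ℝ := fun f => ∏ i, (1 / (((f.1 i : ℕ+) : ℕ) : ℝ)^(l.get i))
  have hc : ∀ f, 0 ≤ c f := fun f => Finset.prod_nonneg fun i _ => by positivity
  have hlast : ∀ f : {f : Fin l.length → ℕ+ // StrictMono f}, 1 ≤ lastOr 0 f.1 := by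
    intro f; unfold lastOr; rw [dif_pos hlen]; exact (f.1 _).pos
  have hK : ∀ f : {f : Fin l.length → ℕ+ // StrictMono f}, ∫ t in Set.Ioi 0, c f * K j (lastOr 0 f.1 - 1) t = (j.factorial:ℝ) * (c f * I j (lastOr 0 f.1)) := by
    intro f
    rw [integral_const_mul, K_I, Nat.sub_add_cancel (hlast f)]; ring
  have hS2 := hS.mul_left (j.factorial:ℝ)
  have hI := hasSum_integral_of_summable_integral_norm (μ := volume.restrict (Set.Ioi (0:ℝ)))
    (F := fun (f : {f : Fin l.length → ℕ+ // StrictMono f}) t => c f * K j (lastOr 0 f.1 - 1) t)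
    (fun f => (K_int j _).const_mul (c f)) (by
      refine hS2.summable.congr fun f => ?_
      rw [← hK f]
      refine setIntegral_congr_fun measurableSet_Ioi fun t ht => ?_
      exact (Real.norm_of_nonneg (mul_nonneg (hc f) (K_nonneg j _ ht))).symm)
  simp_rw [hK] at hI
  have he := hI.unique hS2
  rw [xiL, Real.Gamma_nat_eq_factorial]
  have hint : ∫ t in Set.Ioi (0 : ℝ), t ^ ((j:ℝ)+1 - 1) / (Real.exp t - 1) * LiL l (1 - Real.exp (-t)) = 
      ∫ t in Set.Ioi (0:ℝ), ∑' f : {f : Fin l.length → ℕ+ // StrictMono f}, c f * K j (lastOr 0 f.1 - 1) t := by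
    refine setIntegral_congr_fun measurableSet_Ioi fun t ht => ?_
    rw [LiL, ← tsum_mul_left]
    refine tsum_congr fun f => ?_
    have h1 : (if h : 0 < l.length then ((f.1 ⟨l.length - 1, Nat.sub_lt h Nat.one_pos⟩ : ℕ+) : ℕ) else 0) = (lastOr 0 f.1 - 1) + 1 := by
      rw [Nat.sub_add_cancel (hlast f)]; rfl
    rw [h1, add_sub_cancel_right, Real.rpow_natCast]
    simp only [c, K]
    rw [Finset.prod_div_distrib, Finset.prod_const_one, pow_succ]
    have hp : Real.exp t - 1 ≠ 0 := by
      have := Real.add_one_lt_exp (ne_of_gt ht)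
      have ht' : 0 < t := ht
      linarith
    have h2 : (1 - Real.exp (-t)) = Real.exp (-t) * (Real.exp t - 1) := by
      rw [mul_sub, ← Real.exp_add]; simp
    generalize (1 - Real.exp (-t))^(lastOr 0 f.1 - 1) = y
    rw [h2]
    field_simp
  rw [hint, he]
  have : (j.factorial:ℝ) ≠ 0 := by positivity
  field_simp

lemma final (r k : ℕ) :
    ∑ f ∈ Finset.Nat.antidiagonalTuple (r + 1 + 1) k,
        (-1 : ℝ) ^ (f (Fin.last (r+1))) *
          xiL (List.ofFn fun i : Fin (r+1) => f i.castSucc + 1) ((f (Fin.last (r+1)) : ℝ) + 1) =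
      ∑ p ∈ (Finset.range (k + 1) ×ˢ Finset.range (k + 1)).filter
          (fun p => p.1 + 2 * p.2 = k),
        (-1 : ℝ) ^ p.1 * (Nat.choose (p.1 + (r+1) - 1) ((r+1) - 1) : ℝ) *
          zetaStarL ([p.1 + (r+1) + 1] ++ List.replicate p.2 2) := by
  have h := main_eq r k
  rw [V, RR] at h
  refine Eq.trans (Finset.sum_congr rfl fun f _ => ?_) (h.trans (Finset.sum_congr rfl fun p _ => ?_))
  · rw [xi_X]
    · intro h0
      have := congrArg List.length h0
      simp at this
    · intro k hk
      rw [List.mem_ofFn] at hk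
      obtain ⟨i, rfl⟩ := hk
      omega
  · rw [zetaStar_eq]
    rfl

end AKProof

theorem stmt6 (r k : ℕ) (hr : 1 ≤ r) :
    ∑ f ∈ Finset.Nat.antidiagonalTuple (r + 1) k,
        (-1 : ℝ) ^ (f (Fin.last r)) *
          xiL (List.ofFn fun i : Fin r => f i.castSucc + 1) ((f (Fin.last r) : ℝ) + 1) =
      ∑ p ∈ (Finset.range (k + 1) ×ˢ Finset.range (k + 1)).filter
          (fun p => p.1 + 2 * p.2 = k),
        (-1 : ℝ) ^ p.1 * (Nat.choose (p.1 + r - 1) (r - 1) : ℝ) *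
          zetaStarL ([p.1 + r + 1] ++ List.replicate p.2 2) := by
  obtain ⟨r, rfl⟩ : ∃ r', r = r' + 1 := ⟨r - 1, by omega⟩
  exact AKProof.final r k
end

section
/- For real $x$ with $|x| < 1/2$, $\sum_{l=1}^{\infty} \frac{\Gamma(l-x)\Gamma(l+x)}{\Gamma(l)^2} \cdot \frac{1}{l^2} = \sum_{n=0}^{\infty} \left(\sum_{a+2b=n} [a=0]\, \zeta^{\star}(2, \{2\}^b)\right) x^n$; more precisely, $\sum_{l=1}^{\infty} \frac{1}{l^2}\prod_{k\geq l}\left(1-\frac{x^2}{k^2}\right)^{-1} = \sum_{b=0}^{\infty} \zeta^{\star}(\{2\}^{b+1})\, x^{2b}$. -/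
open scoped BigOperators
open MeasureTheory

open scoped ENNReal
open Filter Topology

noncomputable def sqA (m : ℕ) : ℝ≥0∞ := ENNReal.ofReal (1 / (m : ℝ) ^ 2)

open Classical in
noncomputable def starW (n l : ℕ) : ℝ≥0∞ :=
  ∑' f : Fin n → ℕ+, if Monotone f ∧ ∀ i, l ≤ (f i : ℕ) then ∏ i, sqA (f i) else 0

lemma starW_zero (l : ℕ) : starW 0 l = 1 := by
  unfold starW
  rw [tsum_eq_single (default : Fin 0 → ℕ+)]
  · rw [if_pos]
    · simp
    · exact ⟨fun i => i.elim0, fun i => i.elim0⟩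
  · intro b hb
    exact absurd (Subsingleton.elim _ _) hb

lemma cons_mono {n l : ℕ} (m : ℕ+) (f : Fin n → ℕ+) :
    (Monotone (Fin.cons m f : Fin (n+1) → ℕ+) ∧ ∀ i, l ≤ ((Fin.cons m f : Fin (n+1) → ℕ+) i : ℕ)) ↔
    (l ≤ (m : ℕ) ∧ (Monotone f ∧ ∀ i, (m : ℕ) ≤ (f i : ℕ))) := by
  constructor
  · rintro ⟨h1, h2⟩
    refine ⟨by simpa using h2 0, fun i j hij => ?_, fun i => ?_⟩
    · simpa using h1 (Fin.succ_le_succ_iff.mpr hij)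
    · have := h1 (Fin.zero_le i.succ)
      simpa using this
  · rintro ⟨h1, h2, h3⟩
    refine ⟨fun i j hij => ?_, fun i => ?_⟩
    · induction i using Fin.cases with
      | zero =>
        induction j using Fin.cases with
        | zero => exact le_rfl
        | succ j => simpa using h3 j
      | succ i =>
        induction j using Fin.cases with
        | zero => simp at hij
        | succ j => simpa using h2 (Fin.succ_le_succ_iff.mp hij)
    · induction i using Fin.cases with
      | zero => simpa using h1
      | succ i => simpa using h1.trans (h3 i)

lemma starW_succ (n l : ℕ) :
    starW (n + 1) l = ∑' m : ℕ+, if l ≤ (m : ℕ) then sqA m * starW n m else 0 := by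
  classical
  unfold starW
  rw [← (Fin.consEquiv (fun _ : Fin (n+1) => ℕ+)).tsum_eq, ENNReal.tsum_prod']
  refine tsum_congr fun m => ?_
  by_cases h : l ≤ (m : ℕ)
  · rw [if_pos h, ← ENNReal.tsum_mul_left]
    refine tsum_congr fun f => ?_
    simp only [Fin.consEquiv, Equiv.coe_fn_mk, cons_mono, h, true_and, Fin.prod_univ_succ,
      Fin.cons_zero, Fin.cons_succ, mul_ite, mul_zero]
  · rw [if_neg h]
    simp only [Fin.consEquiv, Equiv.coe_fn_mk, cons_mono, h, false_and, if_false, tsum_zero]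

lemma starW_rec (n l : ℕ) (hl : 0 < l) :
    starW (n + 1) l = sqA l * starW n l + starW (n + 1) (l + 1) := by
  obtain ⟨p, rfl⟩ : ∃ p : ℕ+, (p : ℕ) = l := ⟨⟨l, hl⟩, rfl⟩
  rw [starW_succ, starW_succ, ENNReal.tsum_eq_add_tsum_ite p]
  simp only [le_refl, if_true]
  congr 1
  refine tsum_congr fun m => ?_
  have : m = p ↔ (m : ℕ) = p := PNat.coe_inj.symm
  by_cases h : m = p
  · have := this.mp h
    rw [if_pos h, if_neg (by omega)]
  · have := mt this.mpr h
    rw [if_neg h]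
    by_cases h2 : (p : ℕ) ≤ (m : ℕ)
    · rw [if_pos h2, if_pos (by omega)]
    · rw [if_neg h2, if_neg (by omega)]

lemma tail_le (l : ℕ) (hl : 0 < l) :
    (∑' m : ℕ+, if l ≤ (m : ℕ) then sqA m else 0) ≤ ENNReal.ofReal (2 / l) := by
  have h1 : (∑' m : ℕ+, if l ≤ (m : ℕ) then sqA m else 0)
      ≤ ∑' m : ℕ, if l ≤ m then sqA m else 0 :=
    ENNReal.tsum_comp_le_tsum_of_injective (f := fun m : ℕ+ => (m : ℕ)) PNat.coe_injective
      (fun m : ℕ => if l ≤ m then sqA m else 0)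
  refine h1.trans (ENNReal.tsum_le_of_sum_range_le fun n => ?_)
  have h2 : ∑ i ∈ Finset.range n, (if l ≤ i then sqA i else 0)
      = ∑ i ∈ Finset.Ioo (l - 1) n, sqA i := by
    rw [← Finset.sum_filter]
    refine Finset.sum_congr ?_ fun _ _ => rfl
    ext i
    simp only [Finset.mem_filter, Finset.mem_range, Finset.mem_Ioo]
    omega
  rw [h2]
  unfold sqA
  rw [← ENNReal.ofReal_sum_of_nonneg (fun _ _ => by positivity)]
  apply ENNReal.ofReal_le_ofReal
  have := sum_Ioo_inv_sq_le (α := ℝ) (l - 1) n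
  have e : ((l - 1 : ℕ) : ℝ) + 1 = l := by
    exact_mod_cast Nat.succ_pred_eq_of_pos hl
  rw [e] at this
  simpa [one_div] using this

lemma starW_le (n : ℕ) : ∀ l : ℕ, 0 < l → starW n l ≤ ENNReal.ofReal (2 / l) ^ n := by
  induction n with
  | zero => intro l hl; simp [starW_zero]
  | succ n ih =>
    intro l hl
    rw [starW_succ, pow_succ']
    refine le_trans ?_ (mul_le_mul_left (tail_le l hl) _)
    rw [← ENNReal.tsum_mul_right]
    refine ENNReal.tsum_le_tsum fun m => ?_
    by_cases h : l ≤ (m : ℕ)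
    · rw [if_pos h, if_pos h]
      gcongr
      refine (ih m m.pos).trans ?_
      gcongr
    · simp [h]

lemma zetaStarL_eq (k : List ℕ) (hk : ∀ i, k.get i = 2) :
    zetaStarL k = (starW k.length 1).toReal := by
  classical
  unfold zetaStarL starW
  have h1 : (∑' f : Fin k.length → ℕ+,
      if Monotone f ∧ ∀ i, 1 ≤ (f i : ℕ) then ∏ i, sqA (f i) else 0)
      = ∑' m : {f : Fin k.length → ℕ+ // Monotone f}, ∏ i, sqA (m.1 i) := by
    have := tsum_subtype {f : Fin k.length → ℕ+ | Monotone f} (fun f => ∏ i, sqA (f i))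
    refine Eq.trans ?_ this.symm
    refine tsum_congr fun f => ?_
    have : ∀ i, 1 ≤ (f i : ℕ) := fun i => (f i).pos
    simp only [this, implies_true, and_true, Set.indicator, Set.mem_ofPred_eq]
  rw [h1, ENNReal.tsum_toReal_eq]
  · refine tsum_congr fun m => ?_
    rw [ENNReal.toReal_prod]
    refine Finset.prod_congr rfl fun i _ => ?_
    rw [hk i, sqA, ENNReal.toReal_ofReal (by positivity)]
  · intro m
    exact ENNReal.prod_ne_top fun i _ => ENNReal.ofReal_ne_top

lemma zetaStarL_replicate (n : ℕ) :
    zetaStarL (List.replicate n 2) = (starW n 1).toReal := by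
  rw [zetaStarL_eq _ (fun i => by simp), List.length_replicate]

noncomputable def genG (y : ℝ) (l : ℕ) : ℝ≥0∞ := ∑' b : ℕ, starW b l * ENNReal.ofReal y ^ b

lemma genG_rec (y : ℝ) (l : ℕ) (hl : 0 < l) :
    genG y l = ENNReal.ofReal y * sqA l * genG y l + genG y (l + 1) := by
  unfold genG
  conv_lhs => rw [tsum_eq_zero_add' ENNReal.summable]
  conv_rhs => rw [tsum_eq_zero_add' (f := fun b => starW b (l+1) * ENNReal.ofReal y ^ b) ENNReal.summable]
  simp only [starW_rec _ l hl, starW_zero, add_mul]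
  rw [ENNReal.tsum_add, ← ENNReal.tsum_mul_left]
  have : ∀ b : ℕ, sqA l * starW b l * ENNReal.ofReal y ^ (b+1)
     = ENNReal.ofReal y * sqA l * (starW b l * ENNReal.ofReal y ^ b) := fun b => by ring
  simp only [this]
  ring

lemma genG_ge (y : ℝ) (l : ℕ) : 1 ≤ genG y l := by
  have := ENNReal.le_tsum (f := fun b : ℕ => starW b l * ENNReal.ofReal y ^ b) 0
  unfold genG
  simpa [starW_zero] using this

lemma genG_le (y : ℝ) (hy : 0 ≤ y) (hy2 : y < 1 / 4) (l : ℕ) (hl : 0 < l) :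
    genG y l ≤ ENNReal.ofReal (1 - 2 / l * y)⁻¹ := by
  have hl' : (1 : ℝ) ≤ l := by exact_mod_cast hl
  have h2 : 2 / (l : ℝ) ≤ 2 := by rw [div_le_iff₀ (by linarith)]; linarith
  have h3 : 2 / (l : ℝ) * y ≤ 2 * y := mul_le_mul_of_nonneg_right h2 hy
  have h0 : 0 ≤ 2 / (l : ℝ) * y := by positivity
  have h4 : genG y l ≤ ∑' b : ℕ, (ENNReal.ofReal (2 / l * y)) ^ b := by
    refine ENNReal.tsum_le_tsum fun b => ?_
    rw [ENNReal.ofReal_mul (by positivity), mul_pow]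
    exact mul_le_mul_left (starW_le b l hl) _
  rw [ENNReal.tsum_geometric] at h4
  refine h4.trans (le_of_eq ?_)
  rw [ENNReal.ofReal_inv_of_pos (by linarith), ENNReal.ofReal_sub _ h0, ENNReal.ofReal_one]

lemma genG_ne_top (y : ℝ) (hy : 0 ≤ y) (hy2 : y < 1 / 4) (l : ℕ) (hl : 0 < l) :
    genG y l ≠ ∞ :=
  ne_top_of_le_ne_top ENNReal.ofReal_ne_top (genG_le y hy hy2 l hl)

lemma realG_rec (y : ℝ) (hy : 0 ≤ y) (hy2 : y < 1 / 4) (l : ℕ) (hl : 0 < l) :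
    (genG y (l + 1)).toReal = (genG y l).toReal * (1 - y / (l : ℝ) ^ 2) := by
  have h := congrArg ENNReal.toReal (genG_rec y l hl)
  have t1 := genG_ne_top y hy hy2 l hl
  rw [sqA, ENNReal.toReal_add
    (ENNReal.mul_ne_top (ENNReal.mul_ne_top ENNReal.ofReal_ne_top ENNReal.ofReal_ne_top) t1)
    (genG_ne_top y hy hy2 (l + 1) (by omega)), ENNReal.toReal_mul, ENNReal.toReal_mul,
    ENNReal.toReal_ofReal hy, ENNReal.toReal_ofReal (by positivity)] at h
  linear_combination -h

lemma realG_tendsto (y : ℝ) (hy : 0 ≤ y) (hy2 : y < 1 / 4) :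
    Tendsto (fun l => (genG y l).toReal) atTop (𝓝 1) := by
  have h1 : Tendsto (fun l : ℕ => (1 - 2 / (l : ℝ) * y)⁻¹) atTop (𝓝 1) := by
    have h := tendsto_const_div_atTop_nhds_zero_nat (2 : ℝ)
    have := (((h.mul_const y).const_sub 1).inv₀ (by simp))
    simpa using this
  refine tendsto_of_tendsto_of_tendsto_of_le_of_le' tendsto_const_nhds h1 ?_ ?_
  · filter_upwards [eventually_gt_atTop 0] with l hl
    have := ENNReal.toReal_mono (genG_ne_top y hy hy2 l hl) (genG_ge y l)
    simpa using this
  · filter_upwards [eventually_gt_atTop 0] with l hl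
    have hl' : (1 : ℝ) ≤ l := by exact_mod_cast hl
    have h2 : 2 / (l : ℝ) ≤ 2 := by rw [div_le_iff₀ (by linarith)]; linarith
    have h3 : 2 / (l : ℝ) * y ≤ 2 * y := mul_le_mul_of_nonneg_right h2 hy
    have := ENNReal.toReal_mono ENNReal.ofReal_ne_top (genG_le y hy hy2 l hl)
    rwa [ENNReal.toReal_ofReal (inv_nonneg.mpr (by linarith))] at this

lemma rec_unique (y : ℝ) (F g : ℕ → ℝ)
    (hF : ∀ l, 0 < l → F (l + 1) = F l * (1 - y / (l : ℝ) ^ 2))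
    (hg : ∀ l, 0 < l → g (l + 1) = g l * (1 - y / (l : ℝ) ^ 2))
    (tF : Tendsto F atTop (𝓝 1)) (tg : Tendsto g atTop (𝓝 1)) (l : ℕ) (hl : 0 < l) :
    F l = g l := by
  have key : ∀ N, F l * g (N + l) = g l * F (N + l) := by
    intro N
    induction N with
    | zero => simp [mul_comm]
    | succ N ih =>
      have e : N + 1 + l = (N + l) + 1 := by ring
      rw [e, hF _ (by omega), hg _ (by omega)]
      linear_combination (1 - y / ((N + l : ℕ) : ℝ) ^ 2) * ih
  have t1 := ((tendsto_add_atTop_iff_nat l).mpr tg).const_mul (F l)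
  have t2 := ((tendsto_add_atTop_iff_nat l).mpr tF).const_mul (g l)
  simp only [key] at t1
  simpa using tendsto_nhds_unique t1 t2

lemma fac_pos (y : ℝ) (hy : 0 ≤ y) (hy2 : y < 1 / 4) (l : ℕ) (hl : 0 < l) :
    3 / 4 ≤ 1 - y / (l : ℝ) ^ 2 := by
  have hl' : (1 : ℝ) ≤ (l : ℝ) ^ 2 := one_le_pow₀ (by exact_mod_cast hl)
  have : y / (l : ℝ) ^ 2 ≤ y := div_le_self hy hl'
  linarith

lemma tprod_eq_G (y : ℝ) (hy : 0 ≤ y) (hy2 : y < 1 / 4) (l : ℕ) (hl : 0 < l) :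
    ∏' k : {k : ℕ // l ≤ k}, (1 - y / ((k : ℕ) : ℝ) ^ 2)⁻¹ = (genG y l).toReal := by
  let e : ℕ ≃ {k : ℕ // l ≤ k} :=
    { toFun := fun i => ⟨i + l, by omega⟩
      invFun := fun k => k.1 - l
      left_inv := fun i => by simp
      right_inv := fun k => by
        apply Subtype.ext
        have := k.2
        simp only
        omega }
  rw [← e.tprod_eq]
  have hm : Multipliable (fun i : ℕ => (1 - y / ((i + l : ℕ) : ℝ) ^ 2)⁻¹) := by
    have hs : Summable (fun i : ℕ => (1 - y / ((i + l : ℕ) : ℝ) ^ 2)⁻¹ - 1) := by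
      have h0 : Summable (fun i : ℕ => 2 * y * (1 / ((i + l : ℕ) : ℝ) ^ 2)) :=
        ((summable_nat_add_iff l).mpr
          (Real.summable_one_div_nat_pow.mpr (by norm_num : 1 < 2))).mul_left (2 * y)
      refine Summable.of_nonneg_of_le (fun i => ?_) (fun i => ?_) h0
      · have := fac_pos y hy hy2 (i + l) (by omega)
        have h1 : 0 ≤ y / ((i + l : ℕ) : ℝ) ^ 2 := by positivity
        rw [sub_nonneg]
        exact (one_le_inv₀ (by linarith)).mpr (by linarith)
      · have := fac_pos y hy hy2 (i + l) (by omega)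
        have h1 : 0 ≤ y / ((i + l : ℕ) : ℝ) ^ 2 := by positivity
        rw [show 2 * y * (1 / ((i + l : ℕ) : ℝ) ^ 2) = 2 * (y / ((i + l : ℕ) : ℝ) ^ 2) by ring]
        set t := y / ((i + l : ℕ) : ℝ) ^ 2
        rw [sub_le_iff_le_add, inv_le_iff_one_le_mul₀ (by linarith)]
        nlinarith
    have := Real.multipliable_one_add_of_summable hs
    simpa using this
  have t1 := hm.hasProd.tendsto_prod_nat
  have tg := (tendsto_add_atTop_iff_nat l).mpr (realG_tendsto y hy hy2)
  have t2 := t1.mul tg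
  have key : ∀ N : ℕ, (∏ i ∈ Finset.range N, (1 - y / ((i + l : ℕ) : ℝ) ^ 2)⁻¹)
      * (genG y (N + l)).toReal = (genG y l).toReal := by
    intro N
    induction N with
    | zero => simp
    | succ N ih =>
      have e : N + 1 + l = (N + l) + 1 := by ring
      have := fac_pos y hy hy2 (N + l) (by omega)
      rw [e, realG_rec y hy hy2 _ (by omega), Finset.prod_range_succ, ← ih]
      have h : (1 - y / ((N + l : ℕ) : ℝ) ^ 2) ≠ 0 := by linarith
      rw [mul_assoc, mul_comm (genG y (N + l)).toReal, inv_mul_cancel_left₀ h]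
  simp only [key, mul_one] at t2
  exact (tendsto_nhds_unique tendsto_const_nhds t2).symm

noncomputable def gamF (x : ℝ) (l : ℕ) : ℝ :=
  Real.Gamma ((l : ℕ) - x) * Real.Gamma ((l : ℕ) + x) / (Real.Gamma (l : ℕ)) ^ 2

lemma gamF_rec (x : ℝ) (hx : |x| < 1 / 2) (l : ℕ) (hl : 0 < l) :
    gamF x (l + 1) = gamF x l * (1 - x ^ 2 / (l : ℝ) ^ 2) := by
  have hl' : (1 : ℝ) ≤ l := by exact_mod_cast hl
  have := abs_lt.mp hx
  unfold gamF
  push_cast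
  rw [show (l : ℝ) + 1 - x = (l - x) + 1 by ring, show (l : ℝ) + 1 + x = (l + x) + 1 by ring,
    Real.Gamma_add_one (by linarith), Real.Gamma_add_one (by linarith),
    Real.Gamma_add_one (by linarith)]
  have : Real.Gamma (l : ℝ) ≠ 0 := (Real.Gamma_pos_of_pos (by linarith)).ne'
  have : (l : ℝ) ≠ 0 := by linarith
  field_simp
  ring

lemma gamF_tendsto (x : ℝ) (hx : |x| < 1 / 2) : Tendsto (gamF x) atTop (𝓝 1) := by
  have hx' := abs_lt.mp hx
  rw [← tendsto_add_atTop_iff_nat 1]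
  have key : ∀ n : ℕ, gamF x (n + 1)
      = gamF x 1 * ∏ j ∈ Finset.range n, (1 - x ^ 2 / ((j : ℝ) + 1) ^ 2) := by
    intro n
    induction n with
    | zero => simp
    | succ n ih =>
      rw [gamF_rec x hx _ (by omega), ih, Finset.prod_range_succ]
      push_cast
      ring
  by_cases h0 : x = 0
  · subst h0
    have : ∀ n : ℕ, gamF 0 (n + 1) = 1 := by
      intro n
      rw [key]
      simp [gamF]
    simp only [this]
    exact tendsto_const_nhds
  · have t := (Real.tendsto_euler_sin_prod x)
    have hpi : Real.pi * x ≠ 0 := mul_ne_zero Real.pi_ne_zero h0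
    have hsin : Real.sin (Real.pi * x) ≠ 0 := by
      rw [Ne, Real.sin_eq_zero_iff_of_lt_of_lt]
      · exact hpi
      · nlinarith [Real.pi_pos]
      · nlinarith [Real.pi_pos]
    have h1 : gamF x 1 = Real.pi * x / Real.sin (Real.pi * x) := by
      have := Real.Gamma_mul_Gamma_one_sub x
      unfold gamF
      rw [show ((1 : ℕ) : ℝ) + x = x + 1 by push_cast; ring, Real.Gamma_add_one h0]
      simp only [Nat.cast_one, Real.Gamma_one]
      rw [show Real.Gamma (1 - x) * (x * Real.Gamma x) / 1 ^ 2
        = x * (Real.Gamma x * Real.Gamma (1 - x)) by ring, this]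
      ring
    have t2 := t.const_mul (Real.sin (Real.pi * x))⁻¹
    rw [inv_mul_cancel₀ hsin] at t2
    refine t2.congr fun n => ?_
    rw [key, h1]
    ring

lemma tsum_G (x : ℝ) (hx : |x| < 1 / 2) :
    ∑' l : ℕ+, (1 / ((l : ℕ) : ℝ) ^ 2) * (genG (x ^ 2) l).toReal =
      ∑' b : ℕ, zetaStarL (List.replicate (b + 1) 2) * x ^ (2 * b) := by
  have hy : 0 ≤ x ^ 2 := sq_nonneg x
  have hy2 : x ^ 2 < 1 / 4 := by
    have := abs_lt.mp hx
    nlinarith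
  have h1 : ∑' l : ℕ+, (1 / ((l : ℕ) : ℝ) ^ 2) * (genG (x ^ 2) l).toReal
      = (∑' l : ℕ+, sqA l * genG (x ^ 2) l).toReal := by
    rw [ENNReal.tsum_toReal_eq]
    · refine tsum_congr fun l => ?_
      rw [ENNReal.toReal_mul, sqA, ENNReal.toReal_ofReal (by positivity)]
    · intro l
      exact ENNReal.mul_ne_top ENNReal.ofReal_ne_top (genG_ne_top _ hy hy2 _ l.pos)
  have h2 : ∑' b : ℕ, zetaStarL (List.replicate (b + 1) 2) * x ^ (2 * b)
      = (∑' b : ℕ, starW (b + 1) 1 * ENNReal.ofReal (x ^ 2) ^ b).toReal := by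
    rw [ENNReal.tsum_toReal_eq]
    · refine tsum_congr fun b => ?_
      rw [ENNReal.toReal_mul, zetaStarL_replicate, ENNReal.toReal_pow,
        ENNReal.toReal_ofReal hy, pow_mul]
    · intro b
      refine ENNReal.mul_ne_top (ne_top_of_le_ne_top ?_ (starW_le (b + 1) 1 one_pos))
        (ENNReal.pow_ne_top ENNReal.ofReal_ne_top)
      exact ENNReal.pow_ne_top ENNReal.ofReal_ne_top
  rw [h1, h2]
  congr 1
  unfold genG
  simp only [← ENNReal.tsum_mul_left, starW_succ, ← ENNReal.tsum_mul_right]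
  rw [ENNReal.tsum_comm]
  refine tsum_congr fun b => tsum_congr fun l => ?_
  rw [if_pos (show 1 ≤ (l : ℕ) from l.pos), mul_assoc]

theorem stmt7 (x : ℝ) (hx : |x| < 1 / 2) :
    (∑' l : ℕ+, Real.Gamma ((l : ℕ) - x) * Real.Gamma ((l : ℕ) + x)
        / (Real.Gamma (l : ℕ)) ^ 2 * (1 / ((l : ℕ) : ℝ) ^ 2) =
      ∑' b : ℕ, zetaStarL (List.replicate (b + 1) 2) * x ^ (2 * b)) ∧
    (∑' l : ℕ+, (1 / ((l : ℕ) : ℝ) ^ 2) *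
        ∏' k : {k : ℕ // (l : ℕ) ≤ k}, (1 - x ^ 2 / ((k : ℕ) : ℝ) ^ 2)⁻¹ =
      ∑' b : ℕ, zetaStarL (List.replicate (b + 1) 2) * x ^ (2 * b)) := by
  have hy : 0 ≤ x ^ 2 := sq_nonneg x
  have hy2 : x ^ 2 < 1 / 4 := by
    have := abs_lt.mp hx
    nlinarith
  rw [← tsum_G x hx]
  refine ⟨tsum_congr fun l => ?_, tsum_congr fun l => ?_⟩
  · rw [← rec_unique (x ^ 2) (gamF x) (fun l => (genG (x ^ 2) l).toReal) (gamF_rec x hx)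
      (realG_rec _ hy hy2) (gamF_tendsto x hx) (realG_tendsto _ hy hy2) l l.pos, mul_comm]
    rfl
  · rw [tprod_eq_G _ hy hy2 l l.pos]
end
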